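/- arXiv:1609.03270 — 4 statements merged into one kernel-verified Lean document; each statement's English description precedes it below -/
import Mathlib

section
/- Let X be a real Banach space and let p be a real number with p > 1. Suppose that every bounded linear operator from X to ℓ^p is compact. Then for every real number q with 1 < q < p, every bounded linear operator from X to ℓ^q is compact. -/
/-!
An operator `T : X → ℓ^q` is compact as soon as the tails of `T x` are small uniformly over the unit
ball, because `T` is then a norm limit of its finite rank truncations. If `T` is not compact, there
are therefore `ε > 0`, consecutive intervals `I₀, I₁, …` of `ℕ` and `x₀, x₁, …` in the unit ball
such that the restriction of `T xₖ` to `Iₖ` has norm greater than `ε`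
(`exists_block_of_not_isCompactOperator`). Let `φₖ` be a norming functional for that restriction.
Since the `Iₖ` are disjoint and `‖φₖ‖ ≤ 1`, the sequence `k ↦ φₖ (T x restricted to Iₖ)` lies
in `ℓ^q ⊆ ℓ^p` for every `x`, which defines an operator `S : X → ℓ^p`, bounded by the closed graph
theorem. Its values satisfy `(S xₖ)ₖ > ε` for all `k`, which is impossible if `S` is compact,
because the coordinates of a convergent sequence in `ℓ^p` tend to zero uniformly.
-/

open Filter Topology

noncomputable section

/-- The coordinate projection of `ℓ^r` onto the span of the unit vectors `e_i` with `i ∈ F`. -/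
def finsetProj (r : ENNReal) [Fact (1 ≤ r)] (F : Finset ℕ) :
    lp (fun _ : ℕ => ℝ) r →L[ℝ] lp (fun _ : ℕ => ℝ) r :=
  ∑ i ∈ F, (lp.singleContinuousLinearMap ℝ (fun _ : ℕ => ℝ) r i).comp
    (lp.evalCLM ℝ (fun _ : ℕ => ℝ) r i)

theorem finsetProj_apply (r : ENNReal) [Fact (1 ≤ r)] (F : Finset ℕ)
    (y : lp (fun _ : ℕ => ℝ) r) :
    finsetProj r F y = ∑ i ∈ F, lp.single r i (y i) := by
  simp only [finsetProj, _root_.sum_apply]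
  rfl

theorem isCompactOperator_finsetProj_comp {X : Type*} [NormedAddCommGroup X] [NormedSpace ℝ X]
    (r : ENNReal) [Fact (1 ≤ r)] (F : Finset ℕ) (T : X →L[ℝ] lp (fun _ : ℕ => ℝ) r) :
    IsCompactOperator ((finsetProj r F).comp T) := by
  classical
  induction F using Finset.induction_on with
  | empty =>
    have : (finsetProj r ∅).comp T = 0 := by ext; simp [finsetProj]
    rw [this]
    exact isCompactOperator_zero
  | insert a F ha ih =>
    have h1 : IsCompactOperator ((lp.evalCLM ℝ (fun _ : ℕ => ℝ) r a).comp T) :=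
      isCompactOperator_of_locallyCompactSpace_dom _
    have h2 := (h1.clm_comp (lp.singleContinuousLinearMap ℝ (fun _ : ℕ => ℝ) r a)).add ih
    have heq : ⇑((finsetProj r (insert a F)).comp T) =
        ⇑(lp.singleContinuousLinearMap ℝ (fun _ : ℕ => ℝ) r a) ∘
          ⇑((lp.evalCLM ℝ (fun _ : ℕ => ℝ) r a).comp T) + ⇑((finsetProj r F).comp T) := by
      funext x
      simp only [finsetProj, Finset.sum_insert ha]
      rfl
    rw [heq]
    exact h2

/-- A noncompact operator into `ℓ^r` carries a fixed amount of mass arbitrarily far out: beyond each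
`N` there is a finite interval on which the image of some unit ball vector is large. -/
theorem exists_block_of_not_isCompactOperator {X : Type*} [NormedAddCommGroup X] [NormedSpace ℝ X]
    (r : ENNReal) [Fact (1 ≤ r)] (hr : r ≠ ⊤) (T : X →L[ℝ] lp (fun _ : ℕ => ℝ) r)
    (hT : ¬ IsCompactOperator T) :
    ∃ ε > 0, ∀ N : ℕ, ∃ M : ℕ, ∃ x : X, N < M ∧ ‖x‖ ≤ 1 ∧
      ε < ‖finsetProj r (Finset.Ico N M) (T x)‖ := by
  by_contra! hcon
  apply hT
  -- `T` lies in the closed set of compact operators, being approximated by its truncations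
  have hcl : IsClosed {f : X →L[ℝ] lp (fun _ : ℕ => ℝ) r | IsCompactOperator f} :=
    isClosed_setOfPred_isCompactOperator
  have hmem : T ∈ closure {f : X →L[ℝ] lp (fun _ : ℕ => ℝ) r | IsCompactOperator f} := by
    rw [Metric.mem_closure_iff]
    intro ε hε
    obtain ⟨N, hN⟩ := hcon (ε / 2) (by positivity)
    refine ⟨(finsetProj r (Finset.range N)).comp T, isCompactOperator_finsetProj_comp r _ T, ?_⟩
    rw [dist_eq_norm]
    refine lt_of_le_of_lt (ContinuousLinearMap.opNorm_le_of_unit_norm (by positivity) ?_)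
      (half_lt_self hε)
    intro x hx
    have hlim := ((lp.hasSum_single hr (T x)).tendsto_sum_nat.sub_const
      (finsetProj r (Finset.range N) (T x))).norm
    refine le_of_tendsto hlim ?_
    filter_upwards [eventually_gt_atTop N] with M hM
    have h1 := hN M x hM hx.le
    rwa [finsetProj_apply, Finset.sum_Ico_eq_sub _ hM.le, ← finsetProj_apply r (Finset.range N)]
      at h1
  rw [hcl.closure_eq] at hmem
  exact hmem

/-- By the closed graph theorem, functionals `ψ k` with `(ψ k x)ₖ ∈ ℓ^r` for all `x` are the
coordinates of a bounded operator into `ℓ^r`. -/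
theorem exists_clm_of_forall_memℓp {X : Type*} [NormedAddCommGroup X] [NormedSpace ℝ X]
    [CompleteSpace X] (r : ENNReal) [Fact (1 ≤ r)] (ψ : ℕ → X →L[ℝ] ℝ)
    (hψ : ∀ x, Memℓp (fun k => ψ k x) r) :
    ∃ S : X →L[ℝ] lp (fun _ : ℕ => ℝ) r, ∀ x k, S x k = ψ k x := by
  let g : X →ₗ[ℝ] lp (fun _ : ℕ => ℝ) r :=
    { toFun := fun x => ⟨fun k => ψ k x, hψ x⟩
      map_add' := fun x y => by ext k; exact map_add (ψ k) x y
      map_smul' := fun c x => by ext k; exact map_smul (ψ k) c x }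
  refine ⟨ContinuousLinearMap.ofSeqClosedGraph (g := g) ?_, fun x k => rfl⟩
  intro u x y hu hy
  ext k
  have h1 : Tendsto (fun n => ψ k (u n)) atTop (𝓝 (y k)) :=
    ((lp.evalCLM ℝ (fun _ : ℕ => ℝ) r k).continuous.tendsto y).comp hy
  have h2 : Tendsto (fun n => ψ k (u n)) atTop (𝓝 (ψ k x)) :=
    ((ψ k).continuous.tendsto x).comp hu
  exact tendsto_nhds_unique h1 h2

/-- Functionals of norm at most one applied to the restrictions of `y ∈ ℓ^r` to consecutive intervals
give a sequence in `ℓ^r`. -/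
theorem memℓp_of_blocks (r : ENNReal) [Fact (1 ≤ r)] (hr : r ≠ ⊤) (n : ℕ → ℕ) (hn : Monotone n)
    (φ : ℕ → StrongDual ℝ (lp (fun _ : ℕ => ℝ) r)) (hφ : ∀ k, ‖φ k‖ ≤ 1)
    (y : lp (fun _ : ℕ => ℝ) r) :
    Memℓp (fun k => φ k (finsetProj r (Finset.Ico (n k) (n (k + 1))) y)) r := by
  have hr0 : 0 < r.toReal := ENNReal.toReal_pos (zero_lt_one.trans_le Fact.out).ne' hr
  have hterm : ∀ k, ‖φ k (finsetProj r (Finset.Ico (n k) (n (k + 1))) y)‖ ^ r.toReal ≤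
      ∑ i ∈ Finset.Ico (n k) (n (k + 1)), ‖y i‖ ^ r.toReal := by
    intro k
    rw [← lp.norm_sum_single hr0, ← finsetProj_apply]
    refine Real.rpow_le_rpow (norm_nonneg _) ?_ hr0.le
    simpa using (φ k).le_of_opNorm_le (hφ k) (finsetProj r (Finset.Ico (n k) (n (k + 1))) y)
  have hsum : ∀ m, ∑ k ∈ Finset.range m, ∑ i ∈ Finset.Ico (n k) (n (k + 1)), ‖y i‖ ^ r.toReal =
      ∑ i ∈ Finset.Ico (n 0) (n m), ‖y i‖ ^ r.toReal := by
    intro m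
    induction m with
    | zero => simp
    | succ m ih =>
      rw [Finset.sum_range_succ, ih,
        Finset.sum_Ico_consecutive _ (hn (Nat.zero_le m)) (hn (Nat.le_succ m))]
  refine memℓp_gen' (C := ‖y‖ ^ r.toReal) fun s => ?_
  obtain ⟨m, hm⟩ := s.exists_nat_subset_range
  calc _ ≤ ∑ k ∈ Finset.range m,
        ‖φ k (finsetProj r (Finset.Ico (n k) (n (k + 1))) y)‖ ^ r.toReal :=
        Finset.sum_le_sum_of_subset_of_nonneg hm fun _ _ _ => by positivity
    _ ≤ _ := Finset.sum_le_sum fun k _ => hterm k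
    _ = _ := hsum m
    _ ≤ _ := lp.sum_rpow_le_norm_rpow hr0 y _

/-- A compact operator into `ℓ^r` with `r < ∞` cannot have diagonal coordinates `(S xₖ)ₖ` bounded
away from `0` along a sequence in the unit ball. -/
theorem not_isCompactOperator_of_diagonal {X : Type*} [NormedAddCommGroup X] [NormedSpace ℝ X]
    (r : ENNReal) [Fact (1 ≤ r)] (hr : r ≠ ⊤) (S : X →L[ℝ] lp (fun _ : ℕ => ℝ) r)
    (x : ℕ → X) (hx : ∀ k, ‖x k‖ ≤ 1) (ε : ℝ) (hε : 0 < ε) (hS : ∀ k, ε < ‖S (x k) k‖) :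
    ¬ IsCompactOperator S := by
  intro hc
  have hr1 : r ≠ 0 := (zero_lt_one.trans_le Fact.out).ne'
  have hr0 : 0 < r.toReal := ENNReal.toReal_pos hr1 hr
  obtain ⟨K, hK, hSK⟩ := IsCompactOperator.image_closedBall_subset_compact
    (f := (S : X →ₗ[ℝ] lp (fun _ : ℕ => ℝ) r)) hc 1
  obtain ⟨z, -, θ, hθ, hz⟩ := hK.tendsto_subseq (x := fun k => S (x k))
    fun k => hSK ⟨x k, by simpa using hx k, rfl⟩
  have hz0 : Tendsto (fun k => ‖z k‖) atTop (𝓝 0) := by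
    have h1 := ((lp.hasSum_norm hr0 z).summable.tendsto_atTop_zero).rpow_const
      (p := r.toReal⁻¹) (Or.inr (by positivity))
    rw [Real.zero_rpow (by positivity)] at h1
    refine h1.congr fun k => ?_
    exact Real.rpow_rpow_inv (norm_nonneg _) hr0.ne'
  have hd : Tendsto (fun k => ‖S (x (θ k)) - z‖ + ‖z (θ k)‖) atTop (𝓝 (0 + 0)) :=
    (tendsto_iff_norm_sub_tendsto_zero.1 hz).add (hz0.comp hθ.tendsto_atTop)
  rw [add_zero] at hd
  obtain ⟨k, hk⟩ := (hd.eventually (gt_mem_nhds hε)).exists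
  have h2 : ‖S (x (θ k)) (θ k) - z (θ k)‖ ≤ ‖S (x (θ k)) - z‖ :=
    lp.norm_apply_le_norm hr1 (S (x (θ k)) - z) (θ k)
  have h3 := norm_sub_norm_le (S (x (θ k)) (θ k)) (z (θ k))
  linarith [hS (θ k)]

end

/-- Let `X` be a real Banach space and `p > 1` a real number. If every
bounded linear operator from `X` to `ℓ^p` is compact, then for every real `q` with
`1 < q < p`, every bounded linear operator from `X` to `ℓ^q` is compact. -/
theorem statement0 (X : Type*) [NormedAddCommGroup X] [NormedSpace ℝ X] [CompleteSpace X]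
    (p : ℝ) (hp : 1 < p) [Fact (1 ≤ ENNReal.ofReal p)]
    (h : ∀ T : X →L[ℝ] lp (fun _ : ℕ => ℝ) (ENNReal.ofReal p), IsCompactOperator T)
    (q : ℝ) (hq1 : 1 < q) (hqp : q < p) [Fact (1 ≤ ENNReal.ofReal q)] :
    ∀ T : X →L[ℝ] lp (fun _ : ℕ => ℝ) (ENNReal.ofReal q), IsCompactOperator T := by
  intro T
  by_contra hT
  obtain ⟨ε, hε, hstep⟩ :=
    exists_block_of_not_isCompactOperator (ENNReal.ofReal q) ENNReal.ofReal_ne_top T hT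
  choose M x hM hx hbig using hstep
  -- the endpoints of the consecutive intervals: `n (k + 1) = M (n k)`
  let n : ℕ → ℕ := fun k => M^[k] 0
  have hsucc : ∀ k, n (k + 1) = M (n k) := fun k => Function.iterate_succ_apply' M k 0
  have hn : Monotone n := monotone_nat_of_le_succ fun k => (hsucc k).symm ▸ (hM (n k)).le
  choose φ hφ hφv using fun k => exists_dual_vector'' ℝ
    (finsetProj (ENNReal.ofReal q) (Finset.Ico (n k) (n (k + 1))) (T (x (n k))))
  obtain ⟨S, hS⟩ := exists_clm_of_forall_memℓp (ENNReal.ofReal p)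
    (fun k => (φ k).comp
      ((finsetProj (ENNReal.ofReal q) (Finset.Ico (n k) (n (k + 1)))).comp T))
    (fun v => (memℓp_of_blocks (ENNReal.ofReal q) ENNReal.ofReal_ne_top n hn φ hφ
      (T v)).of_exponent_ge (ENNReal.ofReal_le_ofReal hqp.le))
  refine not_isCompactOperator_of_diagonal (ENNReal.ofReal p) ENNReal.ofReal_ne_top S
    (fun k => x (n k)) (fun k => hx _) ε hε (fun k => ?_) (h S)
  have hval : S (x (n k)) k =
      ‖finsetProj (ENNReal.ofReal q) (Finset.Ico (n k) (n (k + 1))) (T (x (n k)))‖ :=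
    (hS _ k).trans (hφv k)
  rw [hval, norm_norm, hsucc]
  exact hbig (n k)
end

section
/- Let 1 ≤ p < ∞, let Y be a real Banach space, and let T : ℓ^p → Y be a bounded linear operator. Suppose that for every bounded block sequence (x_n) in ℓ^p (with respect to the standard unit vector basis) one has ‖T(x_n)‖ → 0 as n → ∞. Then T is a compact operator. -/
/-!
Write `P N` for the projection of `ℓ^p` onto the first `N` coordinates. Each `T ∘ P N` has finite
rank, so compactness of `T` follows once `T ∘ P N → T` in operator norm, i.e. once `T` is small on
vectors supported in a far enough tail (`exists_tail_bound`).

If the tail bound fails for some `ε > 0`, then every tail `[N, ∞)` carries a vector `f` with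
`‖T f‖ > ε ‖f‖`. Because `p < ∞`, the truncations of `f` converge to `f`, so the strict inequality
survives for some truncation, supported in some `[N, M)` (`exists_block_of_tail`). Normalising and
iterating `N ↦ M` from `0` gives a block sequence of norm at most one on which `‖T ·‖ > ε`,
contrary to hypothesis.
-/

open scoped ENNReal

/-- A sequence `x` in `ℓ^p` is a block sequence (with respect to the standard unit
vector basis) if there is a strictly increasing sequence `m : ℕ → ℕ` with `m 0 = 0`
such that the `n`-th vector `x n` is supported in the coordinate interval
`[m n, m (n+1))`. -/
def IsBlockSequence (p : ℝ≥0∞) (x : ℕ → lp (fun _ : ℕ => ℝ) p) : Prop :=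
  ∃ m : ℕ → ℕ, m 0 = 0 ∧ StrictMono m ∧
    ∀ n i, (i < m n ∨ m (n + 1) ≤ i) → (x n : ℕ → ℝ) i = 0

section Tail

variable {q : ℝ≥0∞} [Fact (1 ≤ q)] {Y : Type*} [NormedAddCommGroup Y] [NormedSpace ℝ Y]

/-- The projection of `ℓ^q` onto the first `N` coordinates. -/
noncomputable def coordProj (q : ℝ≥0∞) [Fact (1 ≤ q)] (N : ℕ) :
    lp (fun _ : ℕ => ℝ) q →L[ℝ] lp (fun _ : ℕ => ℝ) q :=
  ∑ i ∈ Finset.range N, (lp.singleContinuousLinearMap ℝ (fun _ : ℕ => ℝ) q i).comp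
    (lp.evalCLM ℝ (fun _ : ℕ => ℝ) q i)

lemma coordProj_eq_sum (N : ℕ) (f : lp (fun _ : ℕ => ℝ) q) :
    coordProj q N f = ∑ i ∈ Finset.range N, lp.single q i (f i) := by
  simp [coordProj]
  rfl

lemma coordProj_apply (N : ℕ) (f : lp (fun _ : ℕ => ℝ) q) (i : ℕ) :
    coordProj q N f i = if i < N then f i else 0 := by
  simp only [coordProj_eq_sum, lp.coeFn_sum, lp.coeFn_single, Finset.sum_apply,
    Finset.sum_pi_single, Finset.mem_range]

lemma isCompactOperator_comp_coordProj (T : lp (fun _ : ℕ => ℝ) q →L[ℝ] Y) (N : ℕ) :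
    IsCompactOperator (T.comp (coordProj q N)) := by
  have hP : coordProj q N ∈ compactOperator (RingHom.id ℝ) (lp (fun _ : ℕ => ℝ) q)
      (lp (fun _ : ℕ => ℝ) q) := by
    refine Submodule.sum_mem _ fun i _ => ?_
    -- Each summand factors through the locally compact space `ℝ`.
    exact (isCompactOperator_of_locallyCompactSpace_rng
      (lp.singleContinuousLinearMap ℝ (fun _ : ℕ => ℝ) q i)).comp_clm _
  exact IsCompactOperator.clm_comp hP T

lemma norm_sub_coordProj_le (N : ℕ) (f : lp (fun _ : ℕ => ℝ) q) :
    ‖f - coordProj q N f‖ ≤ ‖f‖ := by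
  refine lp.norm_mono (zero_lt_one.trans_le Fact.out).ne' fun i => ?_
  rw [lp.coeFn_sub, Pi.sub_apply, coordProj_apply]
  split_ifs <;> simp

/-- A vector witnessing that `T` is not `ε`-small on the tail `[N, ∞)` can be replaced by a vector
of norm at most one supported in a finite block `[N, M)`. -/
lemma exists_block_of_tail (hq : q ≠ ⊤) (T : lp (fun _ : ℕ => ℝ) q →L[ℝ] Y) {ε : ℝ}
    {N : ℕ} {f : lp (fun _ : ℕ => ℝ) q} (hf : ∀ i < N, f i = 0) (hTf : ε * ‖f‖ < ‖T f‖) :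
    ∃ (M : ℕ) (x : lp (fun _ : ℕ => ℝ) q), N < M ∧ ‖x‖ ≤ 1 ∧ ε < ‖T x‖ ∧
      ∀ i, (i < N ∨ M ≤ i) → x i = 0 := by
  have hlim : Filter.Tendsto (fun M => coordProj q M f) Filter.atTop (nhds f) := by
    simpa only [coordProj_eq_sum] using (lp.hasSum_single hq f).tendsto_sum_nat
  have hev : ∀ᶠ M in Filter.atTop, ε * ‖coordProj q M f‖ < ‖T (coordProj q M f)‖ :=
    (hlim.norm.const_mul ε).eventually_lt ((T.continuous.tendsto f).comp hlim).norm hTf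
  obtain ⟨M, hM, hNM⟩ := (hev.and (Filter.eventually_gt_atTop N)).exists
  set g := coordProj q M f with hg
  have hg0 : 0 < ‖g‖ := by
    rw [norm_pos_iff]
    intro h0
    simp [h0] at hM
  refine ⟨M, ‖g‖⁻¹ • g, hNM, ?_, ?_, ?_⟩
  · rw [norm_smul, norm_inv, norm_norm, inv_mul_cancel₀ hg0.ne']
  · rw [map_smul, norm_smul, norm_inv, norm_norm, inv_mul_eq_div, lt_div_iff₀ hg0]
    exact hM
  · intro i hi
    rw [lp.coeFn_smul, Pi.smul_apply, hg, coordProj_apply]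
    rcases hi with hi | hi
    · simp [hf i hi]
    · simp [not_lt.2 hi]

lemma exists_tail_bound (hq : q ≠ ⊤) (T : lp (fun _ : ℕ => ℝ) q →L[ℝ] Y)
    (h : ∀ x : ℕ → lp (fun _ : ℕ => ℝ) q, IsBlockSequence q x → (∃ B : ℝ, ∀ n, ‖x n‖ ≤ B) →
      Filter.Tendsto (fun n => ‖T (x n)‖) Filter.atTop (nhds 0)) {ε : ℝ} (hε : 0 < ε) :
    ∃ N : ℕ, ∀ f : lp (fun _ : ℕ => ℝ) q, (∀ i < N, f i = 0) → ‖T f‖ ≤ ε * ‖f‖ := by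
  by_contra! hcon
  choose f hf hTf using hcon
  choose M x hNM hx hTx hsupp using fun N => exists_block_of_tail hq T (hf N) (hTf N)
  -- The block endpoints are the iterates of `N ↦ M N` starting at `0`.
  let m : ℕ → ℕ := fun n => M^[n] 0
  have hm : ∀ n, m (n + 1) = M (m n) := fun n => Function.iterate_succ_apply' M n 0
  have hblock : IsBlockSequence q fun n => x (m n) :=
    ⟨m, rfl, strictMono_nat_of_lt_succ fun n => (hm n).symm ▸ hNM (m n),
      fun n i hi => hsupp (m n) i (hm n ▸ hi)⟩
  have hlim := h _ hblock ⟨1, fun n => hx _⟩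
  exact hε.not_ge (ge_of_tendsto' hlim fun n => (hTx (m n)).le)

end Tail

/-- Let `1 ≤ p < ∞`, let `Y` be a real Banach space and `T : ℓ^p → Y` a
bounded linear operator. If `‖T (x n)‖ → 0` for every bounded block sequence `(x n)`
in `ℓ^p`, then `T` is compact. -/
theorem statement1 (p : ℝ) (hp : 1 ≤ p) [Fact (1 ≤ ENNReal.ofReal p)]
    (Y : Type*) [NormedAddCommGroup Y] [NormedSpace ℝ Y] [CompleteSpace Y]
    (T : lp (fun _ : ℕ => ℝ) (ENNReal.ofReal p) →L[ℝ] Y)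
    (h : ∀ x : ℕ → lp (fun _ : ℕ => ℝ) (ENNReal.ofReal p),
      IsBlockSequence (ENNReal.ofReal p) x → (∃ B : ℝ, ∀ n, ‖x n‖ ≤ B) →
      Filter.Tendsto (fun n => ‖T (x n)‖) Filter.atTop (nhds 0)) :
    IsCompactOperator T := by
  have hq : ENNReal.ofReal p ≠ ⊤ := ENNReal.ofReal_ne_top
  refine isCompactOperator_of_tendsto (l := Filter.atTop)
    (F := fun N => T.comp (coordProj (ENNReal.ofReal p) N)) ?_
    (Filter.Eventually.of_forall fun N => isCompactOperator_comp_coordProj T N)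
  rw [Metric.tendsto_atTop]
  intro ε hε
  obtain ⟨N, hN⟩ := exists_tail_bound hq T h (half_pos hε)
  refine ⟨N, fun n hn => ?_⟩
  rw [dist_comm, dist_eq_norm]
  refine (ContinuousLinearMap.opNorm_le_bound _ (half_pos hε).le fun f => ?_).trans_lt
    (half_lt_self hε)
  have htail : ∀ i < N, (f - coordProj (ENNReal.ofReal p) n f) i = 0 := by
    intro i hi
    rw [lp.coeFn_sub, Pi.sub_apply, coordProj_apply, if_pos (hi.trans_le hn), sub_self]
  calc ‖(T - T.comp (coordProj (ENNReal.ofReal p) n)) f‖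
      = ‖T (f - coordProj (ENNReal.ofReal p) n f)‖ := by simp
    _ ≤ ε / 2 * ‖f - coordProj (ENNReal.ofReal p) n f‖ := hN _ htail
    _ ≤ ε / 2 * ‖f‖ := by
      gcongr
      exact norm_sub_coordProj_le n f
end

section
/- There exists an infinite-dimensional separable real Banach space X such that every bounded linear operator from ℓ² to X is compact and every bounded linear operator from X to ℓ² is compact. -/
/-!
The space is a Bourgain–Delbaen space with parameters `a = 19/20` and `b = 2/5`. It consists of
bounded sequences indexed by `ℕ`. Each index `k` carries a code `(m, ξ, η)`, every code being used
infinitely often, and the first `n` coordinates are extended to a whole sequence by the rule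
`y k = a * y ξ + b * (y η - (P m y) η)`, where `P m y` is the extension of the first `m` coordinates
of `y`. As `b < 1/2` and `a < 1`, these extensions are bounded uniformly in `n` (`abs_ext_le`), and
the space `BD` is the set of `x` with `P n x → x`. It is separable and infinite-dimensional.

*Operators to `ℓ²`.* Among three successive blocks, at each coordinate one is damped, so that their
sum has norm at most about `2 + a < 3` (`norm_add_add_le`). Hence the restriction of a functional to
the tails of the space tends to `0` in norm (`tendsto_norm_sub_comp_Q`), and the dual is isomorphic
to `ℓ¹` via the coordinate functionals (`dualEquiv`). If `T : BD → ℓ²` is not the norm limit of the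
finite-rank operators `T ∘ Q n`, there are bounded `z N` in the tails with `T (z N)` weakly null and
bounded away from `0`. The adjoint of `T` goes from `ℓ²` to `ℓ¹`, so it is small on some `T (z N)`
by a Pitt-type argument (`exists_norm_lt_of_weaklyNull`); this contradicts
`(adj T (T (z N))) (z N) = ‖T (z N)‖ ^ 2`.

*Operators from `ℓ²`.* Let `T : ℓ² → BD` and suppose that `u n` is bounded and weakly null with
`T (u n)` bounded away from `0`. The vectors `a • u n + b • u p` with `p` large have squared norm
about `a² + b² = 17/16` times as large, and by the coordinates coded by suitable `(m, ξ, η)` the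
lower bound for their images grows by the factor `a² + b²` too (`exists_weaklyNull_step`). Since
`a² + b² > 1`, iterating contradicts the boundedness of `T` (`exists_norm_lt_of_weaklyNull_BD`).
-/

open scoped ENNReal

/-- The property of a real normed space `X` asserted in STATEMENT 4: `X` is an
infinite-dimensional separable Banach space such that every bounded linear operator
from `ℓ²` to `X` is compact and every bounded linear operator from `X` to `ℓ²` is
compact. -/
def CompactlyLinkedWithL2 (X : Type*) [NormedAddCommGroup X] [NormedSpace ℝ X] : Prop :=
  CompleteSpace X ∧ TopologicalSpace.SeparableSpace X ∧ ¬ FiniteDimensional ℝ X ∧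
    (∀ T : lp (fun _ : ℕ => ℝ) 2 →L[ℝ] X, IsCompactOperator T) ∧
    (∀ T : X →L[ℝ] lp (fun _ : ℕ => ℝ) 2, IsCompactOperator T)

open Filter Topology

namespace BourgainDelbaen

/-! ### Bounded sequences -/

/-- The space of bounded real sequences with the supremum norm. -/
abbrev Linf : Type := lp (fun _ : ℕ => ℝ) ∞

/-- A bounded sequence, as an element of `Linf`. -/
def Linf.mk (x : ℕ → ℝ) (C : ℝ) (h : ∀ k, |x k| ≤ C) : Linf :=
  ⟨x, memℓp_infty_iff.2 ⟨C, by rintro _ ⟨k, rfl⟩; exact h k⟩⟩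

lemma Linf.mk_apply (x : ℕ → ℝ) (C : ℝ) (h : ∀ k, |x k| ≤ C) (k : ℕ) : Linf.mk x C h k = x k := rfl

lemma Linf.abs_apply_le (x : Linf) (k : ℕ) : |x k| ≤ ‖x‖ :=
  lp.norm_apply_le_norm ENNReal.top_ne_zero x k

/-! ### The extension operators -/

/-- The cut-off point `m` in the code `(m, ξ, η)` of the index `k`. -/
def cut (k : ℕ) : ℕ := k.unpair.2.unpair.1

/-- The left index `ξ` in the code `(m, ξ, η)` of the index `k`. -/
def left (k : ℕ) : ℕ := k.unpair.2.unpair.2.unpair.1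

/-- The right index `η` in the code `(m, ξ, η)` of the index `k`. -/
def right (k : ℕ) : ℕ := k.unpair.2.unpair.2.unpair.2

/-- The code `(m, ξ, η)` of `k` is admissible if `ξ < m ≤ k` and `η < k`. -/
def Adm (k : ℕ) : Prop := cut k ≤ k ∧ left k < cut k ∧ right k < k

instance (k : ℕ) : Decidable (Adm k) := inferInstanceAs (Decidable (_ ∧ _ ∧ _))

/-- Every code is used at arbitrarily late indices. -/
lemma exists_code (N m ξ η : ℕ) : ∃ k, N ≤ k ∧ cut k = m ∧ left k = ξ ∧ right k = η :=
  ⟨Nat.pair N (Nat.pair m (Nat.pair ξ η)), Nat.left_le_pair _ _,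
    by simp [cut], by simp [left], by simp [right]⟩

/-- `ext x n k` is the `k`-th coordinate of the Bourgain–Delbaen extension of `(x 0, …, x (n-1))`.
A coordinate `k ≥ n` with admissible code `(m, ξ, η)` is
`a * y ξ + b * (y η - (P m y) η)`, where `y` is the extension under construction, `P m y` is
the extension of its first `m` coordinates, `a = 19/20` and `b = 2/5`. Since
`P m y = P (min m n) x`, this is a recursion on `k`. -/
noncomputable def ext (x : ℕ → ℝ) (n k : ℕ) : ℝ :=
  if k < n then x k
  else if h : Adm k then
    19 / 20 * ext x n (left k) + 2 / 5 * (ext x n (right k) - ext x (min (cut k) n) (right k))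
  else 0
termination_by k
decreasing_by
  · exact lt_of_lt_of_le h.2.1 h.1
  · exact h.2.2
  · exact h.2.2

lemma ext_of_lt (x : ℕ → ℝ) {n k : ℕ} (h : k < n) : ext x n k = x k := by
  rw [ext, if_pos h]

lemma ext_of_adm (x : ℕ → ℝ) {n k : ℕ} (h : n ≤ k) (hk : Adm k) :
    ext x n k = 19 / 20 * ext x n (left k) +
      2 / 5 * (ext x n (right k) - ext x (min (cut k) n) (right k)) := by
  rw [ext, if_neg (not_lt.2 h), dif_pos hk]

lemma ext_of_not_adm (x : ℕ → ℝ) {n k : ℕ} (h : n ≤ k) (hk : ¬ Adm k) : ext x n k = 0 := by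
  rw [ext, if_neg (not_lt.2 h), dif_neg hk]

lemma left_lt {k : ℕ} (hk : Adm k) : left k < k := lt_of_lt_of_le hk.2.1 hk.1

lemma ext_congr {x y : ℕ → ℝ} (k : ℕ) : ∀ n, (∀ j < n, x j = y j) → ext x n k = ext y n k := by
  induction k using Nat.strong_induction_on with
  | _ k ih =>
    intro n h
    rcases lt_or_ge k n with hk | hk
    · rw [ext_of_lt _ hk, ext_of_lt _ hk, h k hk]
    · by_cases ha : Adm k
      · rw [ext_of_adm _ hk ha, ext_of_adm _ hk ha, ih _ (left_lt ha) n h, ih _ ha.2.2 n h,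
          ih _ ha.2.2 (min (cut k) n) fun j hj => h j (lt_of_lt_of_le hj (min_le_right _ _))]
      · rw [ext_of_not_adm _ hk ha, ext_of_not_adm _ hk ha]

lemma ext_add (x y : ℕ → ℝ) (k : ℕ) : ∀ n, ext (x + y) n k = ext x n k + ext y n k := by
  induction k using Nat.strong_induction_on with
  | _ k ih =>
    intro n
    rcases lt_or_ge k n with hk | hk
    · simp [ext_of_lt _ hk]
    · by_cases ha : Adm k
      · simp only [ext_of_adm _ hk ha, ih _ (left_lt ha), ih _ ha.2.2]
        ring
      · simp [ext_of_not_adm _ hk ha]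

lemma ext_smul (c : ℝ) (x : ℕ → ℝ) (k : ℕ) : ∀ n, ext (c • x) n k = c * ext x n k := by
  induction k using Nat.strong_induction_on with
  | _ k ih =>
    intro n
    rcases lt_or_ge k n with hk | hk
    · simp [ext_of_lt _ hk]
    · by_cases ha : Adm k
      · simp only [ext_of_adm _ hk ha, ih _ (left_lt ha), ih _ ha.2.2]
        ring
      · simp [ext_of_not_adm _ hk ha]

/-- The extensions are uniformly bounded: the constant `5` satisfies `a + 2 * b * 5 ≤ 5`. -/
lemma abs_ext_le {x : ℕ → ℝ} {B : ℝ} (k : ℕ) :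
    ∀ n, (∀ j < n, |x j| ≤ B) → 0 ≤ B → |ext x n k| ≤ 5 * B := by
  induction k using Nat.strong_induction_on with
  | _ k ih =>
    intro n h hB
    rcases lt_or_ge k n with hk | hk
    · rw [ext_of_lt _ hk]
      linarith [h k hk]
    · by_cases ha : Adm k
      · rw [ext_of_adm _ hk ha]
        rcases le_or_gt n (cut k) with hc | hc
        · have h1 := ih _ (left_lt ha) n h hB
          rw [min_eq_right hc, sub_self, mul_zero, add_zero, abs_mul, abs_of_pos (by norm_num)]
          linarith
        · have h1 := h _ (ha.2.1.trans hc)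
          have h2 := ih _ ha.2.2 n h hB
          have h3 := ih _ ha.2.2 (cut k) (fun j hj => h j (hj.trans hc)) hB
          rw [min_eq_left hc.le, ext_of_lt _ (ha.2.1.trans hc)]
          rw [abs_le] at h1 h2 h3 ⊢
          constructor <;> linarith
      · rw [ext_of_not_adm _ hk ha]
        simpa using hB

lemma ext_ext_of_le {x : ℕ → ℝ} {m n : ℕ} (h : m ≤ n) : ext (ext x n) m = ext x m :=
  funext fun k => ext_congr k m fun _ hj => ext_of_lt _ (hj.trans_le h)

lemma ext_ext_of_ge {x : ℕ → ℝ} {m : ℕ} (k : ℕ) : ∀ n, m ≤ n → ext (ext x m) n k = ext x m k := by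
  induction k using Nat.strong_induction_on with
  | _ k ih =>
    intro n h
    rcases lt_or_ge k n with hk | hk
    · rw [ext_of_lt _ hk]
    · by_cases ha : Adm k
      · rw [ext_of_adm _ hk ha, ext_of_adm _ (h.trans hk) ha, ih _ (left_lt ha) n h,
          ih _ ha.2.2 n h]
        rcases le_total m (cut k) with hc | hc
        · rw [ih _ ha.2.2 _ (le_min hc h), min_eq_right hc]
        · rw [min_eq_left (hc.trans h), min_eq_left hc, ext_ext_of_le hc]
      · rw [ext_of_not_adm _ hk ha, ext_of_not_adm _ (h.trans hk) ha]

/-- The extension operator `ext · n` as a bounded operator on bounded sequences. -/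
noncomputable def P (n : ℕ) : Linf →L[ℝ] Linf :=
  LinearMap.mkContinuous
    { toFun := fun x => Linf.mk (ext x n) (5 * ‖x‖)
        fun k => abs_ext_le k n (fun j _ => Linf.abs_apply_le x j) (norm_nonneg x)
      map_add' := fun x y => lp.ext <| funext fun k => ext_add x y k n
      map_smul' := fun c x => lp.ext <| funext fun k => ext_smul c x k n }
    5 fun x => lp.norm_le_of_forall_le (by positivity)
        fun k => abs_ext_le k n (fun j _ => Linf.abs_apply_le x j) (norm_nonneg x)

lemma P_apply (n : ℕ) (x : Linf) (k : ℕ) : P n x k = ext x n k := rfl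

lemma coe_P (n : ℕ) (x : Linf) : ⇑(P n x) = ext x n := rfl

lemma norm_P_le (n : ℕ) (x : Linf) : ‖P n x‖ ≤ 5 * ‖x‖ :=
  lp.norm_le_of_forall_le (by positivity)
    fun k => abs_ext_le k n (fun j _ => Linf.abs_apply_le x j) (norm_nonneg x)

/-! ### The space -/

/-- The Bourgain–Delbaen space: the bounded sequences that are norm limits of their extensions
`P n x`; equivalently, the closure of the union of the ranges of the `P n`. -/
noncomputable def X : Submodule ℝ Linf where
  carrier := {x | Tendsto (fun n => P n x) atTop (𝓝 x)}
  add_mem' hx hy := by simpa using Tendsto.add hx hy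
  zero_mem' := by simp
  smul_mem' c x hx := by simpa using Tendsto.const_smul hx c

lemma mem_X {x : Linf} : x ∈ X ↔ Tendsto (fun n => P n x) atTop (𝓝 x) := Iff.rfl

lemma isClosed_X : IsClosed (X : Set Linf) := by
  refine isClosed_of_closure_subset fun x hx => ?_
  rw [SetLike.mem_coe, mem_X, Metric.tendsto_atTop]
  intro ε hε
  obtain ⟨y, hy, hxy⟩ := Metric.mem_closure_iff.1 hx (ε / 12) (by positivity)
  obtain ⟨N, hN⟩ := Metric.tendsto_atTop.1 (mem_X.1 hy) (ε / 2) (by positivity)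
  refine ⟨N, fun n hn => ?_⟩
  have h1 := hN n hn
  have h2 := norm_P_le n (x - y)
  rw [map_sub] at h2
  rw [dist_eq_norm] at h1 hxy ⊢
  have h3 : P n x - x = (P n x - P n y) + (P n y - y) - (x - y) := by abel
  rw [h3]
  have h4 := norm_sub_le ((P n x - P n y) + (P n y - y)) (x - y)
  have h5 := norm_add_le (P n x - P n y) (P n y - y)
  linarith

lemma P_mem_X (n : ℕ) (x : Linf) : P n x ∈ X := by
  refine mem_X.2 (tendsto_const_nhds.congr' ?_)
  filter_upwards [eventually_ge_atTop n] with k hk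
  exact lp.ext <| funext fun j => (ext_ext_of_ge j k hk).symm

/-- The Bourgain–Delbaen space `X` as a Banach space in its own right. -/
def BD : Type := X

noncomputable instance : NormedAddCommGroup BD := inferInstanceAs (NormedAddCommGroup X)

noncomputable instance : NormedSpace ℝ BD := inferInstanceAs (NormedSpace ℝ X)

instance : CompleteSpace BD := isClosed_X.completeSpace_coe

/-- The `k`-th coordinate functional. -/
noncomputable def coord (k : ℕ) : BD →L[ℝ] ℝ :=
  LinearMap.mkContinuous
    { toFun := fun x : X => (x : Linf) k
      map_add' := fun _ _ => rfl
      map_smul' := fun _ _ => rfl } 1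
    fun x => by rw [one_mul]; exact Linf.abs_apply_le (Subtype.val (p := (· ∈ X)) x) k

lemma abs_coord_le (x : BD) (k : ℕ) : |coord k x| ≤ ‖x‖ :=
  Linf.abs_apply_le (Subtype.val (p := (· ∈ X)) x) k

lemma norm_le_of_coord {x : BD} {C : ℝ} (hC : 0 ≤ C) (h : ∀ k, |coord k x| ≤ C) : ‖x‖ ≤ C :=
  lp.norm_le_of_forall_le (f := Subtype.val (p := (· ∈ X)) x) hC h

lemma BD_ext {x y : BD} (h : ∀ k, coord k x = coord k y) : x = y :=
  Subtype.ext (lp.ext (funext h))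

/-- The basis projection `P n`, acting on the space. -/
noncomputable def Q (n : ℕ) : BD →L[ℝ] BD :=
  LinearMap.mkContinuous
    { toFun := fun x : X => (⟨P n x, P_mem_X n x⟩ : X)
      map_add' := fun x y => Subtype.ext (map_add (P n) (Subtype.val (p := (· ∈ X)) x)
        (Subtype.val (p := (· ∈ X)) y))
      map_smul' := fun c x => Subtype.ext (map_smul (P n) c (Subtype.val (p := (· ∈ X)) x)) } 5
    fun x => norm_P_le n (Subtype.val (p := (· ∈ X)) x)

lemma coord_Q (n : ℕ) (x : BD) (k : ℕ) : coord k (Q n x) = ext (fun j => coord j x) n k := rfl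

lemma norm_Q_le (n : ℕ) (x : BD) : ‖Q n x‖ ≤ 5 * ‖x‖ :=
  norm_P_le n (Subtype.val (p := (· ∈ X)) x)

lemma tendsto_Q (x : BD) : Tendsto (fun n => Q n x) atTop (𝓝 x) :=
  tendsto_subtype_rng.2 (Subtype.prop (p := (· ∈ X)) x)

/-- The first `n` coordinates can be prescribed, at the cost of a factor `5` in the norm; the
vector is moreover in the range of `Q n`. -/
lemma exists_coord_eq (n : ℕ) (s : ℕ → ℝ) {C : ℝ} (h : ∀ k, |s k| ≤ C) :
    ∃ x : BD, ‖x‖ ≤ 5 * C ∧ (∀ k < n, coord k x = s k) ∧ Q n x = x := by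
  have hC : 0 ≤ C := (abs_nonneg _).trans (h 0)
  refine ⟨(⟨P n (Linf.mk s C h), P_mem_X _ _⟩ : X), ?_, fun k hk => ext_of_lt _ hk, ?_⟩
  · refine (norm_P_le _ _).trans ?_
    gcongr
    exact lp.norm_le_of_forall_le hC h
  · exact BD_ext fun k => ext_ext_of_ge k n le_rfl

lemma coord_Q_of_lt {n k : ℕ} (x : BD) (h : k < n) : coord k (Q n x) = coord k x :=
  ext_of_lt _ h

lemma Q_eq_zero {n : ℕ} {x : BD} (h : ∀ k < n, coord k x = 0) : Q n x = 0 := by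
  refine BD_ext fun k => ?_
  rw [coord_Q, ext_congr (y := (0 : ℝ) • (0 : ℕ → ℝ)) k n (fun j hj => by simp [h j hj]), ext_smul]
  simp

/-- The vector in the range of `Q n` whose first `n` coordinates are those of the `j`-th unit
vector. -/
noncomputable def b (n j : ℕ) : BD :=
  (exists_coord_eq n (fun k => if k = j then 1 else 0) (C := 1)
    fun k => by split_ifs <;> simp).choose

lemma coord_b {n k : ℕ} (j : ℕ) (h : k < n) : coord k (b n j) = if k = j then 1 else 0 :=
  (exists_coord_eq n (fun k => if k = j then 1 else 0) (C := 1)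
    fun k => by split_ifs <;> simp).choose_spec.2.1 k h

lemma Q_b (n j : ℕ) : Q n (b n j) = b n j :=
  (exists_coord_eq n (fun k => if k = j then 1 else 0) (C := 1)
    fun k => by split_ifs <;> simp).choose_spec.2.2

lemma Q_eq_sum (n : ℕ) (x : BD) : Q n x = ∑ j ∈ Finset.range n, coord j x • b n j := by
  have h : Q n (x - ∑ j ∈ Finset.range n, coord j x • b n j) = 0 := by
    refine Q_eq_zero fun k hk => ?_
    simp [coord_b _ hk, hk]
  rw [map_sub, sub_eq_zero] at h
  simpa [Q_b] using h

/-- Coordinate `k` of a vector of the space satisfies the defining recursion up to the error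
`‖x - Q k x‖`. -/
lemma abs_coord_sub_le (x : BD) {k : ℕ} (hk : Adm k) :
    |coord k x - (19 / 20 * coord (left k) x +
      2 / 5 * (coord (right k) x - coord (right k) (Q (cut k) x)))| ≤ ‖x - Q k x‖ := by
  have h := abs_coord_le (x - Q k x) k
  rw [map_sub, coord_Q, ext_of_adm _ le_rfl hk, ext_of_lt _ (left_lt hk), ext_of_lt _ hk.2.2,
    min_eq_left hk.1] at h
  exact h

lemma abs_coord_le_of_not_adm (x : BD) {k : ℕ} (hk : ¬ Adm k) : |coord k x| ≤ ‖x - Q k x‖ := by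
  have h := abs_coord_le (x - Q k x) k
  rwa [map_sub, coord_Q, ext_of_not_adm _ le_rfl hk, sub_zero] at h

instance : TopologicalSpace.SeparableSpace BD := by
  set S : Set BD := Set.range fun p : ℕ × ℕ => b p.1 p.2 with hS
  have hsep : TopologicalSpace.IsSeparable (closure (Submodule.span ℝ S : Set BD)) :=
    ((Set.countable_range _).isSeparable.span (R := ℝ)).closure
  have : closure (Submodule.span ℝ S : Set BD) = Set.univ := by
    refine Set.eq_univ_of_forall fun x => mem_closure_of_tendsto (tendsto_Q x) ?_
    refine Eventually.of_forall fun n => ?_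
    rw [Q_eq_sum]
    exact Submodule.sum_mem _ fun j _ => Submodule.smul_mem _ _ (Submodule.subset_span ⟨(n, j), rfl⟩)
  rw [this] at hsep
  exact TopologicalSpace.isSeparable_univ_iff.1 hsep

/-- For every `n`, the vectors `b n 0, …, b n (n - 1)` are linearly independent. -/
lemma not_finiteDimensional_BD : ¬ FiniteDimensional ℝ BD := by
  intro hfd
  set n := Module.finrank ℝ BD + 1 with hn
  have hli : LinearIndependent ℝ fun j : Fin n => b n j := by
    rw [Fintype.linearIndependent_iff]
    intro g hg i
    have h := congrArg (coord i) hg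
    simpa [coord_b _ i.2, Fin.val_inj] using h
  have := hli.fintype_card_le_finrank
  simp [hn] at this

/-! ### The basis is shrinking -/

/-- The vectors whose first `n` coordinates vanish. -/
def V (n : ℕ) : Submodule ℝ BD where
  carrier := {x | ∀ k < n, coord k x = 0}
  add_mem' hx hy k hk := by simp [hx k hk, hy k hk]
  zero_mem' := by simp
  smul_mem' c x hx k hk := by simp [hx k hk]

lemma V_anti {m n : ℕ} (h : m ≤ n) : V n ≤ V m := fun _ hx k hk => hx k (hk.trans_le h)

lemma sub_Q_mem_V (n : ℕ) (x : BD) : x - Q n x ∈ V n := fun k hk => by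
  simp [coord_Q_of_lt x hk]

lemma norm_sub_Q_le (n : ℕ) (x : BD) : ‖x - Q n x‖ ≤ 6 * ‖x‖ := by
  linarith [norm_sub_le x (Q n x), norm_Q_le n x]

/-- Three successive almost-blocks in the unit ball have a sum of norm well below `3`: at a
coordinate `k` beyond the second block with code `(m, ξ, η)`, the first block is damped by the
factor `a` if the cut `m` comes after it, and otherwise the second one is damped by `b`; at earlier
coordinates the third block vanishes. At a coordinate without admissible code the first block is
negligible. -/
lemma norm_add_add_le {x₁ x₂ x₃ : BD} {q₁ q₂ : ℕ} {τ : ℝ} (hq : q₁ ≤ q₂) (hτ : 0 ≤ τ)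
    (n₁ : ‖x₁‖ ≤ 1) (n₂ : ‖x₂‖ ≤ 1) (n₃ : ‖x₃‖ ≤ 1)
    (h₁ : ∀ k ≥ q₁, ‖x₁ - Q k x₁‖ ≤ τ) (h₂ : ∀ k ≥ q₂, ‖x₂ - Q k x₂‖ ≤ τ)
    (v₂ : x₂ ∈ V q₁) (v₃ : x₃ ∈ V q₂) : ‖x₁ + x₂ + x₃‖ ≤ 2 + 19 / 20 + 2 * τ := by
  refine norm_le_of_coord (by positivity) fun k => ?_
  have c₁ := (abs_coord_le x₁ k).trans n₁
  have c₂ := (abs_coord_le x₂ k).trans n₂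
  have c₃ := (abs_coord_le x₃ k).trans n₃
  have key := abs_add_three (coord k x₁) (coord k x₂) (coord k x₃)
  rw [map_add, map_add]
  rcases lt_or_ge k q₂ with hk | hk
  · have : |coord k x₃| = 0 := by rw [v₃ k hk, abs_zero]
    linarith
  have e₁ := h₁ k (hq.trans hk)
  have e₂ := h₂ k hk
  by_cases ha : Adm k
  · rcases le_or_gt q₁ (cut k) with hc | hc
    · have r := (abs_coord_sub_le x₁ ha).trans e₁
      have s := (abs_coord_le (x₁ - Q (cut k) x₁) (right k)).trans (h₁ _ hc)
      have l := (abs_coord_le x₁ (left k)).trans n₁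
      rw [map_sub] at s
      have : |coord k x₁| ≤ 19 / 20 + 2 * τ := by
        rw [abs_le] at r s l ⊢
        constructor <;> linarith
      linarith
    · have r := (abs_coord_sub_le x₂ ha).trans e₂
      rw [v₂ _ (ha.2.1.trans hc), Q_eq_zero fun j hj => v₂ j (hj.trans hc), map_zero] at r
      have l := (abs_coord_le x₂ (right k)).trans n₂
      have : |coord k x₂| ≤ 2 / 5 + τ := by
        rw [abs_le] at r l ⊢
        constructor <;> linarith
      linarith
  · have := (abs_coord_le_of_not_adm x₁ ha).trans e₁
    linarith

lemma exists_forall_norm_sub_Q_le (x : BD) {τ : ℝ} (hτ : 0 < τ) (q : ℕ) :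
    ∃ p ≥ q, ∀ k ≥ p, ‖x - Q k x‖ ≤ τ := by
  obtain ⟨N, hN⟩ := Metric.tendsto_atTop.1 (tendsto_Q x) τ hτ
  refine ⟨max N q, le_max_right _ _, fun k hk => ?_⟩
  have := hN k (le_of_max_le_left hk)
  rw [dist_comm, dist_eq_norm] at this
  exact this.le

/-- If the norms of `f` on the tails `V n` had a positive limit `δ`, three successive blocks in the
unit ball on which `f` is nearly `δ` would add up to a vector of norm nearly `3`. -/
lemma tendsto_norm_restrict (f : BD →L[ℝ] ℝ) :
    Tendsto (fun n => ‖f.comp (V n).subtypeL‖) atTop (𝓝 0) := by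
  set t : ℕ → ℝ := fun n => ‖f.comp (V n).subtypeL‖ with ht
  have ht0 : ∀ n, 0 ≤ t n := fun n => norm_nonneg (f.comp (V n).subtypeL)
  have hanti : Antitone t := fun m n h =>
    ContinuousLinearMap.opNorm_le_bound _ (ht0 m) fun x =>
      (f.comp (V m).subtypeL).le_opNorm ⟨x.1, V_anti h x.2⟩
  have hbdd : BddBelow (Set.range t) := ⟨0, by rintro _ ⟨n, rfl⟩; exact ht0 n⟩
  have hlim := tendsto_atTop_ciInf hanti hbdd
  set δ := ⨅ n, t n with hδ
  have hδt : ∀ n, δ ≤ t n := fun n => ciInf_le hbdd n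
  have hδ0 : 0 ≤ δ := le_ciInf ht0
  rcases hδ0.eq_or_lt with h0 | hpos
  · rwa [h0]
  exfalso
  have hex : ∀ n, ∃ x ∈ V n, ‖x‖ ≤ 1 ∧ 199 / 200 * δ ≤ f x := by
    intro n
    obtain ⟨x, hx1, hx2⟩ := (f.comp (V n).subtypeL).exists_lt_apply_of_lt_opNorm
      (r := 199 / 200 * δ) (lt_of_lt_of_le (by linarith) (hδt n))
    have hx2' : 199 / 200 * δ < |f x| := hx2
    rcases le_abs.1 hx2'.le with h | h
    · exact ⟨x, x.2, hx1.le, h⟩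
    · exact ⟨-x, (V n).neg_mem x.2, by rw [norm_neg]; exact hx1.le, by rw [map_neg]; exact h⟩
  obtain ⟨n, hn⟩ := (hlim.eventually_lt_const (show δ < 201 / 200 * δ by linarith)).exists
  have hτ : (0 : ℝ) < 1 / 200 := by norm_num
  obtain ⟨x₁, v₁, n₁, f₁⟩ := hex n
  obtain ⟨q₁, hq₁, h₁⟩ := exists_forall_norm_sub_Q_le x₁ hτ n
  obtain ⟨x₂, v₂, n₂, f₂⟩ := hex q₁
  obtain ⟨q₂, hq₂, h₂⟩ := exists_forall_norm_sub_Q_le x₂ hτ q₁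
  obtain ⟨x₃, v₃, n₃, f₃⟩ := hex q₂
  have hnorm := norm_add_add_le hq₂ hτ.le n₁ n₂ n₃ h₁ h₂ v₂ v₃
  have hmem : x₁ + x₂ + x₃ ∈ V n :=
    (V n).add_mem ((V n).add_mem v₁ (V_anti hq₁ v₂)) (V_anti (hq₁.trans hq₂) v₃)
  have hle : |f (x₁ + x₂ + x₃)| ≤ t n * ‖x₁ + x₂ + x₃‖ :=
    (f.comp (V n).subtypeL).le_opNorm ⟨_, hmem⟩
  have h4 : t n * ‖x₁ + x₂ + x₃‖ ≤ 201 / 200 * δ * (2 + 19 / 20 + 2 * (1 / 200)) := by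
    gcongr
  have h5 := le_abs_self (f (x₁ + x₂ + x₃))
  rw [map_add, map_add] at *
  linarith

lemma tendsto_norm_sub_comp_Q (f : BD →L[ℝ] ℝ) :
    Tendsto (fun n => ‖f - f.comp (Q n)‖) atTop (𝓝 0) := by
  refine squeeze_zero (fun n => norm_nonneg _) (fun n => ?_)
    (by simpa using (tendsto_norm_restrict f).mul_const 6)
  refine ContinuousLinearMap.opNorm_le_bound _ (by positivity) fun x => ?_
  have h1 : ‖f (x - Q n x)‖ ≤ ‖f.comp (V n).subtypeL‖ * ‖x - Q n x‖ :=
    (f.comp (V n).subtypeL).le_opNorm ⟨_, sub_Q_mem_V n x⟩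
  have h2 : (f - f.comp (Q n)) x = f (x - Q n x) := by simp
  rw [h2, mul_assoc]
  refine h1.trans ?_
  gcongr
  exact norm_sub_Q_le n x

/-! ### The dual space is `ℓ¹` -/

/-- The space of absolutely summable real sequences. -/
abbrev L1 : Type := lp (fun _ : ℕ => ℝ) 1

lemma summable_abs_L1 (c : L1) : Summable fun k => |c k| := by
  simpa using (lp.memℓp c).summable (by simp)

lemma norm_L1 (c : L1) : ‖c‖ = ∑' k, |c k| := by
  simpa using lp.norm_eq_tsum_rpow (by simp) c

lemma summable_mul_coord (c : L1) (x : BD) : Summable fun k => c k * coord k x := by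
  refine Summable.of_norm_bounded ((summable_abs_L1 c).mul_right ‖x‖) fun k => ?_
  rw [Real.norm_eq_abs, abs_mul]
  gcongr
  exact abs_coord_le x k

lemma abs_tsum_mul_coord_le (c : L1) (x : BD) : |∑' k, c k * coord k x| ≤ ‖c‖ * ‖x‖ := by
  rw [norm_L1, ← tsum_mul_right]
  rw [← Real.norm_eq_abs]
  refine tsum_of_norm_bounded ((summable_abs_L1 c).mul_right ‖x‖).hasSum fun k => ?_
  rw [Real.norm_eq_abs, abs_mul]
  gcongr
  exact abs_coord_le x k

/-- The map from `ℓ¹` to the dual space given by `c ↦ ∑ k, c k • coord k`. -/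
noncomputable def U : L1 →L[ℝ] (BD →L[ℝ] ℝ) :=
  LinearMap.mkContinuous₂
    (LinearMap.mk₂ ℝ (fun (c : L1) (x : BD) => ∑' k, c k * coord k x)
      (fun c d x => by
        rw [← (summable_mul_coord c x).tsum_add (summable_mul_coord d x)]
        simp [add_mul])
      (fun r c x => by
        rw [smul_eq_mul, ← tsum_mul_left]
        simp [mul_assoc])
      (fun c x y => by
        rw [← (summable_mul_coord c x).tsum_add (summable_mul_coord c y)]
        simp [mul_add])
      (fun r c x => by
        rw [smul_eq_mul, ← tsum_mul_left]
        simp [mul_left_comm]))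
    1 fun c x => by rw [one_mul]; exact abs_tsum_mul_coord_le c x

lemma U_apply (c : L1) (x : BD) : U c x = ∑' k, c k * coord k x := rfl

/-- Testing `U c` on the extensions of the sign patterns of `(c 0, …, c (n-1))` shows that `U` is
bounded below. -/
lemma norm_le_norm_U (c : L1) : ‖c‖ ≤ 5 * ‖U c‖ := by
  have hs := summable_abs_L1 c
  have key : ∀ n, ∑ k ∈ Finset.range n, |c k| ≤ 5 * ‖U c‖ + 5 * ∑' k, |c (k + n)| := by
    intro n
    obtain ⟨x, hx, hxk, -⟩ := exists_coord_eq n (fun k => SignType.sign (c k)) (C := 1) fun k => by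
      rcases lt_trichotomy (c k) 0 with h | h | h <;> simp [h]
    rw [mul_one] at hx
    have h1 : U c x = ∑ k ∈ Finset.range n, |c k| + ∑' k, c (k + n) * coord (k + n) x := by
      rw [U_apply, ← (summable_mul_coord c x).sum_add_tsum_nat_add n]
      congr 1
      refine Finset.sum_congr rfl fun k hk => ?_
      rw [hxk k (Finset.mem_range.1 hk), mul_comm, sign_mul_self]
    have h2 : |∑' k, c (k + n) * coord (k + n) x| ≤ 5 * ∑' k, |c (k + n)| := by
      rw [← tsum_mul_left, ← Real.norm_eq_abs]
      refine tsum_of_norm_bounded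
        (((summable_nat_add_iff n).2 hs).mul_left 5).hasSum fun k => ?_
      rw [Real.norm_eq_abs, abs_mul, mul_comm]
      gcongr
      exact (abs_coord_le x _).trans hx
    have h3 : U c x ≤ ‖U c‖ * 5 :=
      (le_abs_self _).trans (((U c).le_opNorm x).trans (by gcongr))
    linarith [(abs_le.1 h2).1]
  have hlim : Tendsto (fun n => 5 * ‖U c‖ + 5 * ∑' k, |c (k + n)|) atTop (𝓝 (5 * ‖U c‖)) := by
    simpa using ((tendsto_sum_nat_add fun k => |c k|).const_mul 5).const_add (5 * ‖U c‖)
  rw [norm_L1]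
  exact le_of_tendsto_of_tendsto' hs.hasSum.tendsto_sum_nat hlim key

lemma U_surjective : Function.Surjective U := by
  have hanti : AntilipschitzWith 5 U := AddMonoidHomClass.antilipschitz_of_bound U fun c => by
    simpa using norm_le_norm_U c
  have hclosed : IsClosed (Set.range U) := hanti.isClosed_range U.uniformContinuous
  intro f
  change f ∈ Set.range U
  refine hclosed.mem_of_tendsto (f := fun n => f.comp (Q n)) (b := atTop) ?_ ?_
  · rw [tendsto_iff_norm_sub_tendsto_zero]
    simpa only [norm_sub_rev] using tendsto_norm_sub_comp_Q f
  · refine Eventually.of_forall fun n => ⟨∑ j ∈ Finset.range n, lp.single 1 j (f (b n j)), ?_⟩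
    ext x
    rw [map_sum, sum_apply, ContinuousLinearMap.comp_apply, Q_eq_sum, map_sum]
    refine Finset.sum_congr rfl fun j _ => ?_
    rw [U_apply, tsum_eq_single j, lp.single_apply_self, map_smul, smul_eq_mul, mul_comm]
    intro k hk
    rw [lp.single_apply_ne _ _ _ hk, zero_mul]

/-- The dual of the space is isomorphic to `ℓ¹`. -/
noncomputable def dualEquiv : L1 ≃L[ℝ] (BD →L[ℝ] ℝ) :=
  ContinuousLinearEquiv.ofBijective U
    (LinearMap.ker_eq_bot.2 ((AddMonoidHomClass.antilipschitz_of_bound (K := 5) U fun c => by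
      simpa using norm_le_norm_U c).injective))
    (LinearMap.range_eq_top.2 U_surjective)

/-! ### Operators from the space to `ℓ²` -/

/-- In `ℓ¹`, adding a coordinatewise null sequence is asymptotically additive on norms. -/
lemma eventually_norm_add_ge (c : L1) {d : ℕ → L1} (hd : ∀ i, Tendsto (fun n => d n i) atTop (𝓝 0))
    {ε : ℝ} (hε : 0 < ε) : ∀ᶠ n in atTop, ‖c‖ + ‖d n‖ - ε ≤ ‖c + d n‖ := by
  have h1 := lp.hasSum_single (p := 1) ENNReal.one_ne_top c
  obtain ⟨s, hs⟩ := (h1.eventually (Metric.ball_mem_nhds c (show 0 < ε / 4 by positivity))).exists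
  rw [dist_eq_norm] at hs
  have h2 : Tendsto (fun n => ∑ i ∈ s, |d n i|) atTop (𝓝 0) := by
    simpa using tendsto_finsetSum s fun i _ => (hd i).abs
  filter_upwards [h2.eventually_lt_const (show 0 < ε / 4 by positivity)] with n hn
  set c' : L1 := ∑ i ∈ s, lp.single 1 i (c i) with hc'
  set d' : L1 := ∑ i ∈ s, lp.single 1 i (d n i) with hd'
  have hc's : ∀ i ∈ s, c' i = c i := fun i hi => by
    rw [hc', lp.coeFn_sum, Finset.sum_apply, Finset.sum_eq_single i]
    · exact lp.single_apply_self _ _ _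
    · exact fun j _ hj => lp.single_apply_ne _ _ _ hj.symm
    · exact fun h => (h hi).elim
  have hd's : ∀ i ∈ s, d' i = d n i := fun i hi => by
    rw [hd', lp.coeFn_sum, Finset.sum_apply, Finset.sum_eq_single i]
    · exact lp.single_apply_self _ _ _
    · exact fun j _ hj => lp.single_apply_ne _ _ _ hj.symm
    · exact fun h => (h hi).elim
  have hd'n : ‖d'‖ = ∑ i ∈ s, |d n i| := by
    simpa using lp.norm_sum_single (p := 1) (by simp) (fun i => d n i) s
  have hc'n : ‖c'‖ = ∑ i ∈ s, |c i| := by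
    simpa using lp.norm_sum_single (p := 1) (by simp) (fun i => c i) s
  -- `c'` lives on `s` and `d n - d'` off `s`, so their norms add up exactly
  have hadd : ‖c' + (d n - d')‖ = ‖c'‖ + ‖d n - d'‖ := by
    have h := lp.norm_compl_sum_single (p := 1) (by simp) (c' + (d n - d')) s
    have hval : ∀ i ∈ s, (c' + (d n - d')) i = c i := fun i hi => by
      simp [hc's i hi, hd's i hi]
    have e1 : ∑ i ∈ s, lp.single 1 i ((c' + (d n - d')) i) = c' :=
      Finset.sum_congr rfl fun i hi => by rw [hval i hi]
    have e2 : ∑ i ∈ s, ‖(c' + (d n - d')) i‖ ^ (1 : ℝ≥0∞).toReal = ∑ i ∈ s, |c i| :=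
      Finset.sum_congr rfl fun i hi => by rw [hval i hi]; simp
    rw [e1, e2, ← hc'n] at h
    simp only [ENNReal.toReal_one, Real.rpow_one, add_sub_cancel_left] at h
    linarith
  have t1 : ‖c‖ ≤ ‖c'‖ + ‖c' - c‖ := by
    have := norm_sub_le c' (c' - c)
    rwa [sub_sub_cancel] at this
  have t2 : ‖d n‖ ≤ ‖d n - d'‖ + ‖d'‖ := by
    have := norm_add_le (d n - d') d'
    rwa [sub_add_cancel] at this
  have t3 : ‖c' + (d n - d')‖ ≤ ‖c + d n‖ + ‖c' - c‖ + ‖d'‖ := by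
    have e : c' + (d n - d') = (c + d n) + (c' - c) - d' := by abel
    rw [e]
    exact (norm_sub_le _ _).trans (by gcongr; exact norm_add_le _ _)
  linarith

/-- A bounded operator from a Hilbert space to `ℓ¹` maps no bounded weakly null sequence to a
sequence bounded away from `0`: suitable sums of `N` terms have norm `O(√N)`, but their images have
norm at least a multiple of `N`. -/
lemma exists_norm_lt_of_weaklyNull {H : Type*} [NormedAddCommGroup H] [InnerProductSpace ℝ H]
    [CompleteSpace H] (S : H →L[ℝ] L1) {u : ℕ → H} {M : ℝ} (hM : ∀ n, ‖u n‖ ≤ M)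
    (hu : ∀ v : H, Tendsto (fun n => inner ℝ v (u n)) atTop (𝓝 0)) {δ : ℝ} (hδ : 0 < δ) :
    ∃ n, ‖S (u n)‖ < δ := by
  by_contra! hS
  have hcoord : ∀ i, Tendsto (fun n => S (u n) i) atTop (𝓝 0) := fun i => by
    have h := hu ((InnerProductSpace.toDual ℝ H).symm ((lp.evalCLM ℝ (fun _ : ℕ => ℝ) 1 i).comp S))
    simp only [InnerProductSpace.toDual_symm_apply] at h
    exact h
  have key : ∀ N : ℕ, ∃ y : H, N * (δ / 2) ≤ ‖S y‖ ∧ ‖y‖ ^ 2 ≤ N * (M ^ 2 + 1) := by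
    intro N
    induction N with
    | zero => exact ⟨0, by simp⟩
    | succ N ih =>
      obtain ⟨y, h1, h2⟩ := ih
      obtain ⟨n, h3, h4⟩ := ((eventually_norm_add_ge (S y) hcoord (half_pos hδ)).and
        ((hu y).eventually_lt_const (show (0 : ℝ) < 1 / 2 by norm_num))).exists
      refine ⟨y + u n, ?_, ?_⟩
      · rw [map_add]
        push_cast
        linarith [hS n]
      · rw [norm_add_sq_real]
        have := pow_le_pow_left₀ (norm_nonneg _) (hM n) 2
        push_cast
        linarith
  obtain ⟨N, hN⟩ := exists_nat_gt (‖S‖ ^ 2 * (M ^ 2 + 1) / (δ / 2) ^ 2)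
  rw [div_lt_iff₀ (by positivity)] at hN
  obtain ⟨y, h1, h2⟩ := key N
  have hNpos : (0 : ℝ) < N := by
    by_contra! h
    have : 0 ≤ ‖S‖ ^ 2 * (M ^ 2 + 1) := by positivity
    nlinarith [sq_nonneg (δ / 2)]
  have h3 : (N * (δ / 2)) ^ 2 ≤ (‖S‖ * ‖y‖) ^ 2 :=
    pow_le_pow_left₀ (by positivity) (h1.trans (S.le_opNorm y)) 2
  have h4 : ‖S‖ ^ 2 * ‖y‖ ^ 2 ≤ ‖S‖ ^ 2 * (N * (M ^ 2 + 1)) := by gcongr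
  have h5 : N * (N * (δ / 2) ^ 2) ≤ N * (‖S‖ ^ 2 * (M ^ 2 + 1)) := by
    calc N * (N * (δ / 2) ^ 2) = (N * (δ / 2)) ^ 2 := by ring
      _ ≤ ‖S‖ ^ 2 * ‖y‖ ^ 2 := by rw [← mul_pow]; exact h3
      _ ≤ _ := h4
      _ = _ := by ring
  exact absurd (le_of_mul_le_mul_left h5 hNpos) (not_le.2 hN)

lemma isCompactOperator_sum {E F : Type*} [NormedAddCommGroup E] [NormedSpace ℝ E]
    [NormedAddCommGroup F] [NormedSpace ℝ F] (n : ℕ) (φ : ℕ → E →L[ℝ] ℝ) (v : ℕ → F) :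
    IsCompactOperator fun x => ∑ j ∈ Finset.range n, φ j x • v j := by
  induction n with
  | zero =>
    simp only [Finset.range_zero, Finset.sum_empty]
    exact isCompactOperator_zero
  | succ n ih =>
    simp only [Finset.sum_range_succ]
    refine ih.add ?_
    exact (isCompactOperator_of_locallyCompactSpace_dom (φ n)).clm_comp
      (ContinuousLinearMap.toSpanSingleton ℝ (v n))

/-- The Hilbert space `ℓ²`. -/
abbrev L2 : Type := lp (fun _ : ℕ => ℝ) 2

/-- The adjoint of an operator from the space to `ℓ²`, with `ℓ²` identified with its dual. -/
noncomputable def adj (T : BD →L[ℝ] L2) : L2 →L[ℝ] (BD →L[ℝ] ℝ) :=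
  LinearMap.mkContinuous
    { toFun := fun u => (innerSL ℝ u).comp T
      map_add' := fun u v => by ext x; simp
      map_smul' := fun c u => by ext x; simp } ‖T‖
    fun u => by
      refine ((innerSL ℝ u).opNorm_comp_le T).trans ?_
      rw [innerSL_apply_norm, mul_comm]

lemma adj_apply (T : BD →L[ℝ] L2) (u : L2) (x : BD) : adj T u x = inner ℝ u (T x) := rfl

theorem isCompactOperator_to_L2 (T : BD →L[ℝ] L2) : IsCompactOperator T := by
  have hlim : Tendsto (fun n => T.comp (Q n)) atTop (𝓝 T) := by
    rw [tendsto_iff_norm_sub_tendsto_zero, Metric.tendsto_atTop]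
    by_contra! hcon
    obtain ⟨δ, hδ, hcon⟩ := hcon
    have hex : ∀ N, ∃ n ≥ N, ∃ x : BD, ‖x‖ ≤ 1 ∧ δ / 2 ≤ ‖T (x - Q n x)‖ := by
      intro N
      obtain ⟨n, hn, h⟩ := hcon N
      rw [dist_zero_right, norm_norm] at h
      obtain ⟨x, hx1, hx2⟩ := (T.comp (Q n) - T).exists_lt_apply_of_lt_opNorm
        (r := δ / 2) (by linarith)
      refine ⟨n, hn, x, hx1.le, ?_⟩
      rw [map_sub, norm_sub_rev]
      exact hx2.le
    choose n hn x hx1 hx2 using hex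
    set z : ℕ → BD := fun N => x N - Q (n N) (x N) with hz
    have hz6 : ∀ N, ‖z N‖ ≤ 6 := fun N =>
      (norm_sub_Q_le _ _).trans (by linarith [hx1 N])
    have hu : ∀ v : L2, Tendsto (fun N => inner ℝ v (T (z N))) atTop (𝓝 0) := by
      intro v
      have h := (tendsto_norm_sub_comp_Q (adj T v)).comp (tendsto_atTop_mono hn tendsto_id)
      refine squeeze_zero_norm (fun N => ?_) h
      have h1 := (adj T v - (adj T v).comp (Q (n N))).le_opNorm (x N)
      have h2 : (adj T v - (adj T v).comp (Q (n N))) (x N) = inner ℝ v (T (z N)) := by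
        rw [← adj_apply, hz]
        simp
      rw [h2] at h1
      exact h1.trans (mul_le_of_le_one_right (norm_nonneg _) (hx1 N))
    have hM : ∀ N, ‖T (z N)‖ ≤ ‖T‖ * 6 := fun N => (T.le_opNorm _).trans (by gcongr; exact hz6 N)
    set S : L2 →L[ℝ] L1 := (dualEquiv.symm : (BD →L[ℝ] ℝ) →L[ℝ] L1).comp (adj T) with hS
    have hUS : ∀ w, U (S w) = adj T w := fun w => dualEquiv.apply_symm_apply (adj T w)
    -- `adj T` is small on some `T (z N)`, although its value at `z N` is `‖T (z N)‖ ^ 2`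
    have hε : 0 < (δ / 2) ^ 2 / (6 * (‖U‖ + 1)) := by positivity
    obtain ⟨N, hN⟩ := exists_norm_lt_of_weaklyNull S hM hu hε
    rw [lt_div_iff₀ (by positivity)] at hN
    have h1 : ‖T (z N)‖ ^ 2 ≤ ‖adj T (T (z N))‖ * ‖z N‖ := by
      have := (adj T (T (z N))).le_opNorm (z N)
      rw [adj_apply, real_inner_self_eq_norm_sq, Real.norm_eq_abs, abs_of_nonneg (sq_nonneg _)]
        at this
      exact this
    have h2 : ‖adj T (T (z N))‖ ≤ ‖U‖ * ‖S (T (z N))‖ := by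
      rw [← hUS]
      exact U.le_opNorm _
    have h3 : (δ / 2) ^ 2 ≤ ‖T (z N)‖ ^ 2 := pow_le_pow_left₀ (by positivity) (hx2 N) 2
    have h4 : ‖adj T (T (z N))‖ * ‖z N‖ ≤ (‖U‖ * ‖S (T (z N))‖) * 6 := by
      gcongr
      exact hz6 N
    nlinarith [norm_nonneg (S (T (z N)))]
  refine isCompactOperator_of_tendsto hlim (Eventually.of_forall fun n => ?_)
  have : ⇑(T.comp (Q n)) = fun x => ∑ j ∈ Finset.range n, coord j x • T (b n j) := by
    ext1 x
    rw [ContinuousLinearMap.comp_apply, Q_eq_sum, map_sum]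
    simp
  rw [this]
  exact isCompactOperator_sum n coord _

/-! ### Operators from `ℓ²` to the space -/

section Tree

variable {H : Type*} [NormedAddCommGroup H] [InnerProductSpace ℝ H]

lemma tendsto_apply_of_weaklyNull [CompleteSpace H] {u : ℕ → H}
    (hu : ∀ v : H, Tendsto (fun n => inner ℝ v (u n)) atTop (𝓝 0)) (f : H →L[ℝ] ℝ) :
    Tendsto (fun n => f (u n)) atTop (𝓝 0) := by
  have h := hu ((InnerProductSpace.toDual ℝ H).symm f)
  simpa only [InnerProductSpace.toDual_symm_apply] using h

/-- Since coordinates of `x` with code `(m, ξ, η)` are close to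
`19/20 * x ξ + 2/5 * (x η - (Q m x) η)`, a combination of two almost successive vectors has a
coordinate that sees both of them. -/
lemma exists_coord_ge {x y : BD} {c ε : ℝ} {m ξ η : ℕ} (hε : 0 < ε) (hξ : ξ < m)
    (hx : ‖x - Q m x‖ ≤ ε) (hy : ‖Q m y‖ ≤ ε) (hcx : c ≤ coord ξ x) (hcy : c ≤ coord η y) :
    ∃ k, 17 / 16 * c - 2 * ε ≤ coord k ((19 / 20 : ℝ) • x + (2 / 5 : ℝ) • y) := by
  set z : BD := (19 / 20 : ℝ) • x + (2 / 5 : ℝ) • y with hz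
  obtain ⟨K, hK⟩ := Metric.tendsto_atTop.1 (tendsto_Q z) (2 / 25 * ε) (by positivity)
  obtain ⟨k, hk, hcut, hleft, hright⟩ := exists_code (K + m + η + 1) m ξ η
  have hadm : Adm k := ⟨by omega, by omega, by omega⟩
  refine ⟨k, ?_⟩
  have h0 := abs_coord_sub_le z hadm
  rw [hcut, hleft, hright] at h0
  have h1 : ‖z - Q k z‖ ≤ 2 / 25 * ε := by
    rw [norm_sub_rev, ← dist_eq_norm]
    exact (hK k (by omega)).le
  have h2 := (abs_le.1 (h0.trans h1)).1
  have h3 := (abs_le.1 ((abs_coord_le (Q m y) ξ).trans hy)).1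
  rw [coord_Q_of_lt y hξ] at h3
  have h4 := (abs_le.1 ((abs_coord_le (x - Q m x) η).trans hx)).1
  have h5 := (abs_le.1 ((abs_coord_le (Q m y) η).trans hy)).2
  simp only [hz, map_add, map_smul, map_sub, smul_eq_mul] at h2 h4 ⊢
  linarith

/-- One step up the tree: pairing the terms of a weakly null sequence multiplies the squared norms
by about `17/16`, and the lower bound on the images by about `17/16` as well. -/
lemma exists_weaklyNull_step [CompleteSpace H] (T : H →L[ℝ] BD) {u : ℕ → H} {c C : ℝ}
    (hc : 0 < c) (hC : 0 < C)
    (hu : ∀ v : H, Tendsto (fun n => inner ℝ v (u n)) atTop (𝓝 0))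
    (huC : ∀ n, ‖u n‖ ^ 2 ≤ C) (huc : ∀ n, ∃ γ, c ≤ coord γ (T (u n))) :
    ∃ v : ℕ → H, (∀ w : H, Tendsto (fun n => inner ℝ w (v n)) atTop (𝓝 0)) ∧
      (∀ n, ‖v n‖ ^ 2 ≤ 107 / 100 * C) ∧ ∀ n, ∃ γ, 106 / 100 * c ≤ coord γ (T (v n)) := by
  have hQ : ∀ m, Tendsto (fun p => ‖Q m (T (u p))‖) atTop (𝓝 0) := fun m => by
    have h : Tendsto (fun p => Q m (T (u p))) atTop (𝓝 0) := by
      simp only [Q_eq_sum]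
      have := tendsto_finsetSum (Finset.range m) fun j _ =>
        (tendsto_apply_of_weaklyNull hu ((coord j).comp T)).smul_const (b m j)
      simpa using this
    simpa using h.norm
  have hstep : ∀ n, ∃ p ≥ n, inner ℝ (u n) (u p) ≤ C / 200 ∧
      ∃ γ, 106 / 100 * c ≤ coord γ (T ((19 / 20 : ℝ) • u n + (2 / 5 : ℝ) • u p)) := by
    intro n
    obtain ⟨ξ, hξ⟩ := huc n
    obtain ⟨m, hm, hmξ⟩ := (((tendsto_Q (T (u n))).eventually (Metric.ball_mem_nhds _
      (show 0 < c / 800 by positivity))).and (eventually_gt_atTop ξ)).exists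
    obtain ⟨p, ⟨hp1, hp2⟩, hp3⟩ := (((hQ m).eventually_lt_const
      (show 0 < c / 800 by positivity)).and ((hu (u n)).eventually_lt_const
        (show 0 < C / 200 by positivity)) |>.and (eventually_ge_atTop n)).exists
    obtain ⟨η, hη⟩ := huc p
    refine ⟨p, hp3, hp2.le, ?_⟩
    rw [dist_comm, dist_eq_norm] at hm
    obtain ⟨k, hk⟩ := exists_coord_ge (by positivity) hmξ hm.le hp1.le hξ hη
    refine ⟨k, ?_⟩
    rw [map_add, map_smul, map_smul]
    linarith
  choose p hp hinner hγ using hstep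
  refine ⟨fun n => (19 / 20 : ℝ) • u n + (2 / 5 : ℝ) • u (p n), fun w => ?_, fun n => ?_, hγ⟩
  · simp only [inner_add_right, inner_smul_right]
    simpa using ((hu w).const_mul (19 / 20)).add
      (((hu w).comp (tendsto_atTop_mono hp tendsto_id)).const_mul (2 / 5))
  · rw [norm_add_sq_real, norm_smul, norm_smul, inner_smul_left, inner_smul_right, mul_pow, mul_pow]
    have h1 := huC n
    have h2 := huC (p n)
    have h3 := hinner n
    norm_num
    linarith

/-- An operator from a Hilbert space to the Bourgain–Delbaen space maps no bounded weakly null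
sequence to a sequence bounded away from `0`. Otherwise, iterating the pairing step produces vectors
of norm at most about `(17/16) ^ (k/2)` whose images have norm at least about `(17/16) ^ k`. -/
lemma exists_norm_lt_of_weaklyNull_BD [CompleteSpace H] (T : H →L[ℝ] BD) {u : ℕ → H} {M : ℝ}
    (hM : ∀ n, ‖u n‖ ≤ M) (hu : ∀ v : H, Tendsto (fun n => inner ℝ v (u n)) atTop (𝓝 0)) {δ : ℝ}
    (hδ : 0 < δ) : ∃ n, ‖T (u n)‖ < δ := by
  by_contra! hT
  have hcoord : ∀ n, ∃ σ : ℝ, |σ| = 1 ∧ ∃ γ, δ / 2 ≤ coord γ (T (σ • u n)) := by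
    intro n
    have : ∃ γ, δ / 2 < |coord γ (T (u n))| := by
      by_contra! h
      linarith [hT n, norm_le_of_coord (by positivity) h]
    obtain ⟨γ, hγ⟩ := this
    rcases le_total 0 (coord γ (T (u n))) with h | h
    · rw [abs_of_nonneg h] at hγ
      exact ⟨1, by simp, γ, by simpa using hγ.le⟩
    · rw [abs_of_nonpos h] at hγ
      exact ⟨-1, by simp, γ, by simpa using hγ.le⟩
  choose σ hσ hγ using hcoord
  have hiter : ∀ k : ℕ, ∃ v : ℕ → H, (∀ w : H, Tendsto (fun n => inner ℝ w (v n)) atTop (𝓝 0)) ∧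
      (∀ n, ‖v n‖ ^ 2 ≤ (107 / 100) ^ k * (M ^ 2 + 1)) ∧
      ∀ n, ∃ γ, (106 / 100) ^ k * (δ / 2) ≤ coord γ (T (v n)) := by
    intro k
    induction k with
    | zero =>
      refine ⟨fun n => σ n • u n, fun w => ?_, fun n => ?_, by simpa using hγ⟩
      · refine squeeze_zero_norm (fun n => ?_) (by simpa using (hu w).abs)
        rw [inner_smul_right, Real.norm_eq_abs, abs_mul, hσ, one_mul]
      · rw [norm_smul, Real.norm_eq_abs, hσ, one_mul]
        have := pow_le_pow_left₀ (norm_nonneg _) (hM n) 2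
        linarith
    | succ k ih =>
      obtain ⟨v, h1, h2, h3⟩ := ih
      obtain ⟨w, h4, h5, h6⟩ := exists_weaklyNull_step T (by positivity) (by positivity) h1 h2 h3
      exact ⟨w, h4, fun n => (h5 n).trans_eq (by ring),
        fun n => (h6 n).imp fun γ h => le_trans (by rw [pow_succ']; linarith) h⟩
  have hbound : ∀ k : ℕ, (26 / 25 : ℝ) ^ k * (δ / 2) ^ 2 ≤ ‖T‖ ^ 2 * (M ^ 2 + 1) := by
    intro k
    obtain ⟨v, -, h2, h3⟩ := hiter k
    obtain ⟨γ, hγ⟩ := h3 0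
    have h4 : (106 / 100) ^ k * (δ / 2) ≤ ‖T‖ * ‖v 0‖ :=
      hγ.trans ((le_abs_self _).trans ((abs_coord_le _ _).trans (T.le_opNorm _)))
    have h5 := pow_le_pow_left₀ (by positivity) h4 2
    have h6 : ‖T‖ ^ 2 * ‖v 0‖ ^ 2 ≤ ‖T‖ ^ 2 * ((107 / 100) ^ k * (M ^ 2 + 1)) := by
      gcongr
      exact h2 0
    -- `(26/25) * (107/100) ≤ (106/100) ^ 2`
    have h7 : (26 / 25 : ℝ) ^ k * (107 / 100) ^ k ≤ ((106 / 100) ^ k) ^ 2 := by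
      rw [← mul_pow, ← pow_mul, mul_comm k 2, pow_mul]
      exact pow_le_pow_left₀ (by norm_num) (by norm_num) k
    have h8 : (107 / 100 : ℝ) ^ k * ((26 / 25 : ℝ) ^ k * (δ / 2) ^ 2) ≤
        (107 / 100) ^ k * (‖T‖ ^ 2 * (M ^ 2 + 1)) := by
      calc (107 / 100 : ℝ) ^ k * ((26 / 25 : ℝ) ^ k * (δ / 2) ^ 2)
          = (26 / 25 : ℝ) ^ k * (107 / 100) ^ k * (δ / 2) ^ 2 := by ring
        _ ≤ ((106 / 100) ^ k) ^ 2 * (δ / 2) ^ 2 := by gcongr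
        _ = ((106 / 100) ^ k * (δ / 2)) ^ 2 := by ring
        _ ≤ (‖T‖ * ‖v 0‖) ^ 2 := h5
        _ = ‖T‖ ^ 2 * ‖v 0‖ ^ 2 := by ring
        _ ≤ _ := h6
        _ = _ := by ring
    exact le_of_mul_le_mul_left h8 (by positivity)
  obtain ⟨k, hk⟩ := pow_unbounded_of_one_lt (‖T‖ ^ 2 * (M ^ 2 + 1) / (δ / 2) ^ 2)
    (show (1 : ℝ) < 26 / 25 by norm_num)
  rw [div_lt_iff₀ (by positivity)] at hk
  exact absurd (hbound k) (not_le.2 hk)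

end Tree

/-- Truncation to the first `n` coordinates in `ℓ²`. -/
noncomputable def trunc (n : ℕ) : L2 →L[ℝ] L2 :=
  ∑ i ∈ Finset.range n, (lp.evalCLM ℝ (fun _ : ℕ => ℝ) 2 i).smulRight (lp.single 2 i (1 : ℝ))

lemma trunc_apply (n : ℕ) (y : L2) :
    trunc n y = ∑ i ∈ Finset.range n, y i • (lp.single 2 i (1 : ℝ) : L2) := by
  simp only [trunc, sum_apply, ContinuousLinearMap.smulRight_apply]
  rfl

lemma trunc_eq_sum_single (n : ℕ) (y : L2) :
    trunc n y = ∑ i ∈ Finset.range n, lp.single 2 i (y i) := by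
  rw [trunc_apply]
  refine Finset.sum_congr rfl fun i _ => ?_
  rw [← lp.single_smul, smul_eq_mul, mul_one]

lemma norm_sub_trunc_le (n : ℕ) (y : L2) : ‖y - trunc n y‖ ≤ ‖y‖ := by
  rw [trunc_eq_sum_single]
  have h := lp.norm_compl_sum_single (p := 2) (by norm_num) y (Finset.range n)
  have h2 : 0 ≤ ∑ i ∈ Finset.range n, ‖y i‖ ^ (2 : ℝ≥0∞).toReal :=
    Finset.sum_nonneg fun i _ => by positivity
  simp only [ENNReal.toReal_ofNat, Real.rpow_ofNat] at h h2
  exact le_of_sq_le_sq (by linarith) (norm_nonneg _)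

lemma tendsto_trunc (y : L2) : Tendsto (fun n => trunc n y) atTop (𝓝 y) := by
  simp only [trunc_eq_sum_single]
  exact (lp.hasSum_single (p := 2) (by norm_num) y).tendsto_sum_nat

lemma inner_trunc (n : ℕ) (v y : L2) : inner ℝ v (trunc n y) = inner ℝ (trunc n v) y := by
  simp only [trunc_eq_sum_single, inner_sum, sum_inner, lp.inner_single_left,
    lp.inner_single_right]

theorem isCompactOperator_from_L2 (T : L2 →L[ℝ] BD) : IsCompactOperator T := by
  have hlim : Tendsto (fun n => T.comp (trunc n)) atTop (𝓝 T) := by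
    rw [tendsto_iff_norm_sub_tendsto_zero, Metric.tendsto_atTop]
    by_contra! hcon
    obtain ⟨δ, hδ, hcon⟩ := hcon
    have hex : ∀ N, ∃ n ≥ N, ∃ y : L2, ‖y‖ ≤ 1 ∧ δ / 2 ≤ ‖T (y - trunc n y)‖ := by
      intro N
      obtain ⟨n, hn, h⟩ := hcon N
      rw [dist_zero_right, norm_norm] at h
      obtain ⟨y, hy1, hy2⟩ := (T.comp (trunc n) - T).exists_lt_apply_of_lt_opNorm
        (r := δ / 2) (by linarith)
      refine ⟨n, hn, y, hy1.le, ?_⟩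
      rw [map_sub, norm_sub_rev]
      exact hy2.le
    choose n hn y hy1 hy2 using hex
    have hweak : ∀ v : L2,
        Tendsto (fun N => inner ℝ v (y N - trunc (n N) (y N))) atTop (𝓝 0) := by
      intro v
      have h : Tendsto (fun N => ‖v - trunc (n N) v‖) atTop (𝓝 0) := by
        have := ((tendsto_trunc v).comp (tendsto_atTop_mono hn tendsto_id)).const_sub v
        simpa using this.norm
      refine squeeze_zero_norm (fun N => ?_) h
      rw [inner_sub_right, inner_trunc, ← inner_sub_left]
      exact (norm_inner_le_norm _ _).trans (mul_le_of_le_one_right (norm_nonneg _) (hy1 N))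
    obtain ⟨N, hN⟩ := exists_norm_lt_of_weaklyNull_BD T
      (fun N => (norm_sub_trunc_le (n N) (y N)).trans (hy1 N)) hweak (half_pos hδ)
    exact absurd (hy2 N) (not_le.2 hN)
  refine isCompactOperator_of_tendsto hlim (Eventually.of_forall fun n => ?_)
  have : ⇑(T.comp (trunc n)) = fun y => ∑ i ∈ Finset.range n,
      lp.evalCLM ℝ (fun _ : ℕ => ℝ) 2 i y • T (lp.single 2 i (1 : ℝ)) := by
    ext1 y
    rw [ContinuousLinearMap.comp_apply, trunc_apply, map_sum]
    simp only [map_smul]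
    rfl
  rw [this]
  exact isCompactOperator_sum n (fun i => lp.evalCLM ℝ (fun _ : ℕ => ℝ) 2 i) _

end BourgainDelbaen

/-- There exists an infinite-dimensional separable real Banach space `X`
such that every bounded linear operator from `ℓ²` to `X` is compact and every bounded
linear operator from `X` to `ℓ²` is compact. -/
theorem statement4 :
    ∃ (X : Type) (nX : NormedAddCommGroup X)
      (sX : @NormedSpace ℝ X _ nX.toSeminormedAddCommGroup),
      @CompactlyLinkedWithL2 X nX sX := by
  exact ⟨BourgainDelbaen.BD, inferInstance, inferInstance, inferInstance, inferInstance,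
    BourgainDelbaen.not_finiteDimensional_BD, BourgainDelbaen.isCompactOperator_from_L2,
    BourgainDelbaen.isCompactOperator_to_L2⟩
end

section
/- The compact operators transitivity property fails in general: there exist real Banach spaces X, Y, Z such that every bounded linear operator from X to Y is compact and every bounded linear operator from Y to Z is compact, yet there exists a bounded linear operator from X to Z that is not compact. -/
/-!
Take `X = Z = ℓ^{3/2}` with its identity, which is not compact because the space is infinite
dimensional. For `Y` take a Bourgain–Delbaen space (of the first kind): the closed span in `ℓ^∞` of
vectors `d_0, d_1, …` whose coordinates are given by a unitriangular matrix `BD.D`. The coordinate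
with code `(k, ξ, η, s)` of a finite combination `u` of earlier `d_m` is coordinate `ξ` of the part
of `u` below `k` plus `±1/4` times coordinate `η` of the rest of `u`. The space `Y` has two
properties.

* It is an `L_∞`-space: a combination of `d_0, …, d_{N-1}` has norm at most twice the maximum of
  its first `N` coordinates (`BD.abs_val_le`). Hence functionals on `Y` satisfy a cotype 2
  inequality (`BD.cotype`), which reduces to Khintchine's inequality (`BD.exists_signs_abs`).
* Its block sequences satisfy lower `ℓ¹` estimates: since every code occurs at arbitrarily large
  indices, a large coordinate of `u` and a large coordinate of a later block `w` are combined in a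
  coordinate of `u + w` (`BD.exists_coord_glue`).

If `S : ℓ^{3/2} → Y` is not compact, a gliding hump gives `n` disjoint blocks in the unit ball of
`ℓ^{3/2}` whose images are almost successive blocks of `Y` of norm at least `δ`. The norm of their
sum is at most `n^{2/3}`, but that of its image is at least of order `n`
(`BD.isCompactOperator_of_dom`).

If `T : Y → ℓ^{3/2}` is not compact, there are `n` successive intervals on which `T` maps unit
vectors to blocks of norm at least `δ`. By the cotype inequality, some bounded `x ∈ Y` has the
norms of the `n` blocks of `T x` summing to at least the order of `n^{1/2}`, while by Hölder this
sum is at most of order `n^{1/3}` (`BD.isCompactOperator_of_codom`).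
-/

/-- The property of a triple of real normed spaces `(X, Y, Z)` witnessing the failure
of the compact operators transitivity property: all three spaces are Banach, every
bounded linear operator from `X` to `Y` is compact, every bounded linear operator
from `Y` to `Z` is compact, yet some bounded linear operator from `X` to `Z` is not
compact. -/
def FailsCompactTransitivity (X Y Z : Type*)
    [NormedAddCommGroup X] [NormedSpace ℝ X]
    [NormedAddCommGroup Y] [NormedSpace ℝ Y]
    [NormedAddCommGroup Z] [NormedSpace ℝ Z] : Prop :=
  CompleteSpace X ∧ CompleteSpace Y ∧ CompleteSpace Z ∧
    (∀ T : X →L[ℝ] Y, IsCompactOperator T) ∧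
    (∀ T : Y →L[ℝ] Z, IsCompactOperator T) ∧
    ∃ T : X →L[ℝ] Z, ¬ IsCompactOperator T

open Finset Filter Topology
open scoped ENNReal

noncomputable section

namespace BD

/-! ### The Bourgain–Delbaen matrix -/

/-- An enumeration of codes `(k, ξ, η, s)` in which every code occurs at arbitrarily large
indices. -/
def code (j : ℕ) : ℕ × ℕ × ℕ × ℕ := Denumerable.ofNat (ℕ × ℕ × ℕ × ℕ) j.unpair.1

theorem exists_code (c : ℕ × ℕ × ℕ × ℕ) (N : ℕ) : ∃ j, N ≤ j ∧ code j = c :=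
  ⟨Nat.pair (Encodable.encode c) N, Nat.right_le_pair _ _, by
    rw [code, Nat.unpair_pair]; exact Denumerable.ofNat_encode c⟩

/-- The Bourgain–Delbaen matrix: `D m j` is the `j`-th coordinate of the `m`-th basis vector. It is
unitriangular. If `code j = (k, ξ, η, s)`, then row `j` copies row `ξ` in the columns `m < k`, and
`±1/4` times row `η` in the columns `k ≤ m < j`, with sign `(-1) ^ s`; codes with `ξ` or `η` too
large contribute zero. -/
def D (m : ℕ) (j : ℕ) : ℝ :=
  if j < m then 0 else if j = m then 1 else
    if m < (code j).1 then
      if _h : (code j).2.1 < (code j).1 ∧ (code j).2.1 < j then D m (code j).2.1 else 0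
    else
      if _h : (code j).2.2.1 < j then (-1) ^ (code j).2.2.2 / 4 * D m (code j).2.2.1 else 0
termination_by j

theorem D_lt {m j : ℕ} (h : j < m) : D m j = 0 := by rw [D]; simp [h]

theorem D_self (m : ℕ) : D m m = 1 := by rw [D]; simp

theorem D_gt {m j : ℕ} (h : m < j) : D m j = if m < (code j).1 then
      if (code j).2.1 < (code j).1 ∧ (code j).2.1 < j then D m (code j).2.1 else 0
    else
      if (code j).2.2.1 < j then (-1) ^ (code j).2.2.2 / 4 * D m (code j).2.2.1 else 0 := by
  rw [D]; simp [h.not_gt, h.ne']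

/-- The `j`-th coordinate of the linear combination of the first `N` basis vectors with
coefficients `a`. -/
def val (a : ℕ → ℝ) (N j : ℕ) : ℝ := ∑ l ∈ range N, a l * D l j

theorem val_eq_of_le {a : ℕ → ℝ} {k N j : ℕ} (hj : j < k) (hk : k ≤ N) :
    val a N j = val a k j := by
  unfold val
  symm
  refine sum_subset (range_subset_range.2 hk) fun l _ hl => ?_
  rw [D_lt (hj.trans_le (by simpa using hl)), mul_zero]

/-- The recursion for `D` read on a vector `u` with range `[0, N)`: its coordinate at `j ≥ N` is
coordinate `ξ` of the head of `u` below `k`, plus `±1/4` times coordinate `η` of the rest. -/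
theorem val_gt (a : ℕ → ℝ) {N j : ℕ} (hj : N ≤ j) : val a N j =
    (if (code j).2.1 < (code j).1 ∧ (code j).2.1 < j then
      val a (min N (code j).1) (code j).2.1 else 0) +
    (if (code j).2.2.1 < j then (-1) ^ (code j).2.2.2 / 4 *
      (val a N (code j).2.2.1 - val a (min N (code j).1) (code j).2.2.1) else 0) := by
  obtain ⟨r, hr⟩ := Nat.exists_eq_add_of_le (min_le_left N (code j).1)
  have h1 : ∀ i, val a N i = val a (min N (code j).1) i +
      ∑ l ∈ range r, a (min N (code j).1 + l) * D (min N (code j).1 + l) i := by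
    intro i
    conv_lhs => rw [hr]
    simp only [val]
    rw [sum_range_add]
  rw [h1 j, h1 (code j).2.2.1, add_sub_cancel_left]
  congr 1
  · split_ifs with h
    · refine sum_congr rfl fun l hl => ?_
      have hl := mem_range.1 hl
      rw [D_gt (by omega), if_pos (by omega), if_pos h]
    · refine sum_eq_zero fun l hl => ?_
      have hl := mem_range.1 hl
      rw [D_gt (by omega), if_pos (by omega), if_neg h, mul_zero]
  · split_ifs with h
    · rw [mul_sum]
      refine sum_congr rfl fun l hl => ?_
      have hl := mem_range.1 hl
      rw [D_gt (by omega), if_neg (by omega), if_pos h]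
      ring
    · refine sum_eq_zero fun l hl => ?_
      have hl := mem_range.1 hl
      rw [D_gt (by omega), if_neg (by omega), if_neg h, mul_zero]

/-- A combination of the first `N` basis vectors is bounded by twice its first `N` coordinates. In
the recursion the head contributes at most `M` and the tail at most `(2M + 2M) / 4 = M`. -/
theorem abs_val_le (j : ℕ) : ∀ (N : ℕ) (a : ℕ → ℝ) (M : ℝ), 0 ≤ M →
    (∀ i < N, |val a N i| ≤ M) → |val a N j| ≤ 2 * M := by
  induction j using Nat.strong_induction_on with
  | _ j ih =>
  intro N a M hM h
  rcases lt_or_ge j N with hj | hj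
  · linarith [h j hj]
  rw [val_gt a hj]
  set k := (code j).1
  set ξ := (code j).2.1
  set η := (code j).2.2.1
  set s := (code j).2.2.2
  rcases le_or_gt N k with hk | hk
  · rw [min_eq_left hk, sub_self, mul_zero, ite_self, add_zero]
    split_ifs with h1
    · exact ih ξ h1.2 N a M hM h
    · simpa using hM
  · rw [min_eq_right hk.le]
    have hk' : ∀ i < k, |val a k i| ≤ M := fun i hi => by
      rw [← val_eq_of_le hi hk.le]; exact h i (hi.trans hk)
    have e1 : |if ξ < k ∧ ξ < j then val a k ξ else 0| ≤ M := by
      split_ifs with h1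
      · exact hk' ξ h1.1
      · simpa using hM
    have e2 : |if η < j then (-1) ^ s / 4 * (val a N η - val a k η) else 0| ≤ M := by
      split_ifs with h1
      · rw [abs_mul, abs_div, abs_pow, abs_neg, abs_one, one_pow]
        have a1 := ih η h1 N a M hM h
        have a2 := ih η h1 k a M hM hk'
        have a3 := abs_sub (val a N η) (val a k η)
        norm_num
        linarith
      · simpa using hM
    linarith [abs_add_le (if ξ < k ∧ ξ < j then val a k ξ else 0)
      (if η < j then (-1) ^ s / 4 * (val a N η - val a k η) else 0)]

theorem abs_D_le (m j : ℕ) : |D m j| ≤ 2 := by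
  have key : ∀ i, val (Pi.single m 1) (m + 1) i = D m i := by
    intro i
    unfold val
    rw [sum_eq_single m] <;> simp +contextual
  rw [← key]
  refine (abs_val_le j (m + 1) _ 1 zero_le_one fun i hi => ?_).trans (by norm_num)
  rw [key]
  rcases (Nat.lt_succ_iff.1 hi).lt_or_eq with h | rfl
  · simp [D_lt h]
  · simp [D_self]

/-! ### The space `Y` -/

/-- Real bounded sequences with the supremum norm. -/
abbrev Linf := lp (fun _ : ℕ => ℝ) ∞

/-- The `m`-th Bourgain–Delbaen basis vector, as a bounded sequence. -/
def dvec (m : ℕ) : Linf :=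
  ⟨fun j => D m j, memℓp_infty ⟨2, by rintro _ ⟨j, rfl⟩; exact abs_D_le m j⟩⟩

/-- The Bourgain–Delbaen space: the closed linear span of the basis vectors in `ℓ^∞`. -/
abbrev Y : Submodule ℝ Linf := (Submodule.span ℝ (Set.range dvec)).topologicalClosure

/-- The `m`-th basis vector as an element of `Y`. -/
def bd (m : ℕ) : Y := ⟨dvec m, subset_closure (Submodule.subset_span ⟨m, rfl⟩)⟩

/-- The combination of the first `N` basis vectors with coefficients `a`; terms of `a` from `N` on
are ignored. -/
def vec (a : ℕ → ℝ) (N : ℕ) : Y := ∑ l ∈ range N, a l • bd l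

/-- The `j`-th coordinate functional on `Y`. -/
def coord (j : ℕ) : Y →L[ℝ] ℝ := (lp.evalCLM ℝ (fun _ : ℕ => ℝ) ∞ j).comp Y.subtypeL

theorem coord_apply (j : ℕ) (y : Y) : coord j y = (y : Linf) j := rfl

theorem coord_vec (a : ℕ → ℝ) (N j : ℕ) : coord j (vec a N) = val a N j := by
  simp only [vec, map_sum, map_smul, smul_eq_mul]
  rfl

theorem abs_coord_le (j : ℕ) (y : Y) : |coord j y| ≤ ‖y‖ :=
  lp.norm_apply_le_norm (by simp) (y : Linf) j

theorem norm_le_of_coord {y : Y} {C : ℝ} (hC : 0 ≤ C) (h : ∀ j, |coord j y| ≤ C) : ‖y‖ ≤ C :=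
  lp.norm_le_of_forall_le (f := (y : Linf)) hC h

theorem exists_coord {y : Y} {C : ℝ} (hC : 0 ≤ C) (h : C < ‖y‖) : ∃ j, C < |coord j y| := by
  by_contra! h'
  exact (norm_le_of_coord hC h').not_gt h

/-- The span of the first `N` basis vectors is 2-isomorphic to `ℓ^∞_N` via its first `N`
coordinates. -/
theorem norm_vec_le {a : ℕ → ℝ} {N : ℕ} {M : ℝ} (hM : 0 ≤ M)
    (h : ∀ i < N, |coord i (vec a N)| ≤ M) : ‖vec a N‖ ≤ 2 * M := by
  refine norm_le_of_coord (by positivity) fun j => ?_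
  simp only [coord_vec] at h ⊢
  exact abs_val_le j N a M hM h

theorem exists_vec_near (y : Y) (N₀ : ℕ) {ε : ℝ} (hε : 0 < ε) :
    ∃ a N, N₀ ≤ N ∧ ‖y - vec a N‖ < ε := by
  obtain ⟨w, hw, hyw⟩ := Metric.mem_closure_iff.1 y.2 ε hε
  obtain ⟨c, rfl⟩ := Finsupp.mem_span_range_iff_exists_finsupp.1 hw
  refine ⟨c, N₀ + (c.support.sup id + 1), by omega, ?_⟩
  rw [dist_eq_norm] at hyw
  convert hyw using 1
  rw [← Submodule.norm_coe]
  congr 1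
  simp only [vec, Submodule.coe_sub, Submodule.coe_sum, Submodule.coe_smul, bd]
  congr 1
  symm
  apply Finsupp.sum_of_support_subset
  · intro i hi
    have : i ≤ c.support.sup id := le_sup (f := id) hi
    exact mem_range.2 (by omega)
  · simp

/-- The coordinates below `N` of a vector in the span can be prescribed. -/
theorem exists_vec_coord (N : ℕ) (v : ℕ → ℝ) : ∃ a, ∀ i < N, coord i (vec a N) = v i := by
  simp only [coord_vec]
  induction N with
  | zero => exact ⟨0, by simp⟩
  | succ N ih =>
    obtain ⟨a, ha⟩ := ih
    set a' : ℕ → ℝ := Function.update a N (v N - val a N N) with ha'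
    have h1 : ∀ i, val a' (N + 1) i = val a N i + (v N - val a N N) * D N i := by
      intro i
      simp only [val, sum_range_succ]
      congr 1
      · refine sum_congr rfl fun l hl => ?_
        rw [ha', Function.update_of_ne (mem_range.1 hl).ne]
      · rw [ha', Function.update_self]; rfl
    refine ⟨a', fun i hi => ?_⟩
    rw [h1]
    rcases (Nat.lt_succ_iff.1 hi).lt_or_eq with h | rfl
    · rw [D_lt h, ha i h]; ring
    · rw [D_self]; ring

/-! ### The space `ℓ^{3/2}` -/

/-- The real sequence space `ℓ^{3/2}`. -/
abbrev L := lp (fun _ : ℕ => ℝ) (3 / 2 : ℝ≥0∞)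

theorem toReal_p : (3 / 2 : ℝ≥0∞).toReal = 3 / 2 := by simp

theorem toReal_p_pos : 0 < (3 / 2 : ℝ≥0∞).toReal := by rw [toReal_p]; norm_num

instance fact_one_le : Fact (1 ≤ (3 / 2 : ℝ≥0∞)) :=
  ⟨by rw [ENNReal.le_div_iff_mul_le] <;> norm_num⟩

/-- The projection of `ℓ^{3/2}` onto its first `M` coordinates. -/
def trunc (M : ℕ) : L →L[ℝ] L :=
  ∑ i ∈ range M, (lp.evalCLM ℝ (fun _ : ℕ => ℝ) (3 / 2) i).smulRight (lp.single (3 / 2) i (1 : ℝ))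

theorem trunc_eq (M : ℕ) (z : L) : trunc M z = ∑ i ∈ range M, lp.single (3 / 2) i (z i) := by
  simp only [trunc, _root_.sum_apply, ContinuousLinearMap.smulRight_apply]
  refine sum_congr rfl fun i _ => ?_
  rw [← lp.single_smul, smul_eq_mul, mul_one]
  rfl

theorem trunc_apply (M : ℕ) (z : L) (i : ℕ) : trunc M z i = if i < M then z i else 0 := by
  rw [trunc_eq, lp.coeFn_sum, Finset.sum_apply]
  simp only [lp.single_apply, Pi.single_apply, sum_ite_eq, mem_range]

theorem tendsto_trunc (z : L) : Tendsto (fun M => trunc M z) atTop (𝓝 z) := by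
  simp only [trunc_eq]
  exact (lp.hasSum_single (ENNReal.div_ne_top (by simp) (by simp)) z).tendsto_sum_nat

theorem norm_mono {u v : L} (h : ∀ i, |u i| ≤ |v i|) : ‖u‖ ≤ ‖v‖ :=
  lp.norm_mono (by simp) h

theorem isCompactOperator_trunc (M : ℕ) : IsCompactOperator (trunc M) := by
  unfold trunc
  induction M with
  | zero => simpa using isCompactOperator_zero
  | succ M ih =>
    rw [sum_range_succ, FunLike.coe_add]
    refine ih.add ?_
    exact (isCompactOperator_of_locallyCompactSpace_dom
      (lp.evalCLM ℝ (fun _ : ℕ => ℝ) (3 / 2) M)).continuous_comp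
        (g := fun c : ℝ => c • (lp.single (3 / 2) M (1 : ℝ) : L)) (by fun_prop)

theorem norm_add_of_disjoint {u v : L} {M : ℕ} (hu : ∀ i, M ≤ i → u i = 0)
    (hv : ∀ i < M, v i = 0) :
    ‖u + v‖ ^ (3 / 2 : ℝ) = ‖u‖ ^ (3 / 2 : ℝ) + ‖v‖ ^ (3 / 2 : ℝ) := by
  have h := fun w : L => lp.hasSum_norm toReal_p_pos w
  simp only [toReal_p] at h
  refine (h (u + v)).unique ?_
  convert (h u).add (h v) using 2 with i
  rw [lp.coeFn_add, Pi.add_apply]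
  rcases lt_or_ge i M with hi | hi
  · simp [hv i hi]
  · simp [hu i hi]

theorem norm_trunc_sub {m e : ℕ} (h : m ≤ e) (z : L) :
    ‖trunc e z - trunc m z‖ ^ (3 / 2 : ℝ) = ∑ i ∈ Ico m e, |z i| ^ (3 / 2 : ℝ) := by
  rw [trunc_eq, trunc_eq, ← sum_Ico_eq_sub _ h]
  simpa only [toReal_p, Real.norm_eq_abs] using
    lp.norm_sum_single (E := fun _ : ℕ => ℝ) toReal_p_pos z (Ico m e)

/-- Hölder's inequality for `n ^ 6` successive blocks of a sequence in `ℓ^{3/2}`: the factor is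
`(n ^ 6) ^ (1 / 3)`. -/
theorem sum_norm_trunc_sub_le {m : ℕ → ℕ} (hm : Monotone m) (n : ℕ) (z : L) :
    ∑ j ∈ range (n ^ 6), ‖trunc (m (j + 1)) z - trunc (m j) z‖ ≤ (n : ℝ) ^ 2 * ‖z‖ := by
  have h1 : ∀ N, ∑ j ∈ range N, ‖trunc (m (j + 1)) z - trunc (m j) z‖ ^ (3 / 2 : ℝ) ≤
      ‖z‖ ^ (3 / 2 : ℝ) := by
    intro N
    have : ∑ j ∈ range N, ‖trunc (m (j + 1)) z - trunc (m j) z‖ ^ (3 / 2 : ℝ) =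
        ∑ i ∈ Ico (m 0) (m N), |z i| ^ (3 / 2 : ℝ) := by
      induction N with
      | zero => simp
      | succ N ih =>
        rw [sum_range_succ, ih, norm_trunc_sub (hm (Nat.le_succ N)),
          sum_Ico_consecutive _ (hm (Nat.zero_le N)) (hm (Nat.le_succ N))]
    rw [this]
    simpa only [toReal_p, Real.norm_eq_abs] using
      lp.sum_rpow_le_norm_rpow toReal_p_pos z (Ico (m 0) (m N))
  have h2 := Real.rpow_sum_le_const_mul_sum_rpow_of_nonneg (range (n ^ 6)) (p := 3 / 2)
    (f := fun j => ‖trunc (m (j + 1)) z - trunc (m j) z‖) (by norm_num) (fun _ _ => norm_nonneg _)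
  have h3 : ((#(range (n ^ 6)) : ℕ) : ℝ) ^ ((3 / 2 : ℝ) - 1) = ((n : ℝ) ^ 2) ^ (3 / 2 : ℝ) := by
    rw [card_range, Nat.cast_pow, ← Real.rpow_natCast_mul (by positivity),
      ← Real.rpow_natCast_mul (by positivity)]
    norm_num
  rw [h3] at h2
  refine (Real.rpow_le_rpow_iff (sum_nonneg fun _ _ => norm_nonneg _) (by positivity)
    (by norm_num : (0 : ℝ) < 3 / 2)).1 ?_
  rw [Real.mul_rpow (by positivity) (by positivity)]
  exact h2.trans (mul_le_mul_of_nonneg_left (h1 _) (by positivity))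

/-- Iterating a step that adds a finitely supported vector of norm at most `1`, placed beyond a
prescribed index, `N ^ 3` times starting from `0` gives a vector of norm at most
`(N ^ 3) ^ (2 / 3) = N ^ 2`. -/
theorem exists_blocks (I : ℕ → L → Prop) (h0 : I 0 0)
    (hI : ∀ n u M, I n u → ∃ v : L, (∀ i < M, v i = 0) ∧ (∃ M', ∀ i, M' ≤ i → v i = 0) ∧
      ‖v‖ ≤ 1 ∧ I (n + 1) (u + v)) (N : ℕ) : ∃ u, I (N ^ 3) u ∧ ‖u‖ ≤ (N : ℝ) ^ 2 := by
  have key : ∀ n : ℕ, ∃ u, I n u ∧ ‖u‖ ^ (3 / 2 : ℝ) ≤ n ∧ ∃ M, ∀ i, M ≤ i → u i = 0 := by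
    intro n
    induction n with
    | zero => exact ⟨0, h0, by simp, 0, by simp⟩
    | succ n ih =>
      obtain ⟨u, hu, hn, M, hM⟩ := ih
      obtain ⟨v, hv, ⟨M', hM'⟩, hv1, hI'⟩ := hI n u M hu
      refine ⟨u + v, hI', ?_, max M M', fun i hi => ?_⟩
      · rw [norm_add_of_disjoint hM hv]
        push_cast
        have := Real.rpow_le_one (norm_nonneg v) hv1 (by norm_num : (0 : ℝ) ≤ 3 / 2)
        linarith
      · rw [lp.coeFn_add, Pi.add_apply, hM i (by omega), hM' i (by omega), add_zero]
  obtain ⟨u, hu, hn, -⟩ := key (N ^ 3)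
  refine ⟨u, hu, (Real.rpow_le_rpow_iff (norm_nonneg _) (by positivity)
    (by norm_num : (0 : ℝ) < 3 / 2)).1 (hn.trans_eq ?_)⟩
  rw [Nat.cast_pow, ← Real.rpow_natCast_mul (by positivity), ← Real.rpow_natCast]
  norm_num

theorem false_of_growth {c K : ℝ} (hc : 0 < c)
    (h : ∀ N : ℕ, c * (N : ℝ) ^ 3 ≤ K * (N : ℝ) ^ 2) : False := by
  obtain ⟨N, hN⟩ := exists_nat_gt (max 0 (K / c))
  have hN0 : (0 : ℝ) < N := (le_max_left _ _).trans_lt hN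
  have h1 : K < N * c := (div_lt_iff₀ hc).1 ((le_max_right _ _).trans_lt hN)
  have := h N
  nlinarith [mul_lt_mul_of_pos_right h1 (pow_pos hN0 2)]

/-- Unit-ball vectors supported far out are almost annihilated by a fixed functional; this is the
shrinking property of the unit basis of `ℓ^{3/2}`. -/
theorem exists_tail_small (f : L →L[ℝ] ℝ) {ε : ℝ} (hε : 0 < ε) :
    ∃ M, ∀ v : L, (∀ i < M, v i = 0) → ‖v‖ ≤ 1 → |f v| ≤ ε := by
  by_contra! H
  refine false_of_growth (K := ‖f‖) hε fun N => ?_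
  obtain ⟨u, hu, hu'⟩ := exists_blocks (fun n u => ε * n ≤ f u) (by simp) (fun n u M hu => by
    obtain ⟨v, hv, hv1, hfv⟩ := H M
    have ht : Tendsto (fun m => |f (trunc m v)|) atTop (𝓝 |f v|) :=
      ((f.continuous.tendsto v).comp (tendsto_trunc v)).abs
    obtain ⟨m, hm⟩ := (ht.eventually_const_lt hfv).exists
    have hn : ‖trunc m v‖ ≤ 1 := (norm_mono fun i => by
      rw [trunc_apply]; split_ifs <;> simp).trans hv1
    have hz : ∀ i < M, trunc m v i = 0 := fun i hi => by rw [trunc_apply, hv i hi, ite_self]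
    have hz' : ∀ i, m ≤ i → trunc m v i = 0 := fun i hi => by rw [trunc_apply, if_neg hi.not_gt]
    rcases le_total 0 (f (trunc m v)) with h | h
    · rw [abs_of_nonneg h] at hm
      refine ⟨trunc m v, hz, ⟨m, hz'⟩, hn, ?_⟩
      rw [map_add]; push_cast; linarith
    · rw [abs_of_nonpos h] at hm
      refine ⟨-trunc m v, fun i hi => ?_, ⟨m, fun i hi => ?_⟩, by rwa [norm_neg], ?_⟩
      · rw [lp.coeFn_neg, Pi.neg_apply, hz i hi, neg_zero]
      · rw [lp.coeFn_neg, Pi.neg_apply, hz' i hi, neg_zero]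
      · rw [map_add, map_neg]; push_cast; linarith) N
  calc ε * (N : ℝ) ^ 3 ≤ f u := by exact_mod_cast hu
    _ ≤ ‖f‖ * ‖u‖ := (le_abs_self _).trans (f.le_opNorm u)
    _ ≤ _ := by gcongr

/-! ### Signs -/

/-- A choice of signs at least as good as the average. For random signs, `x + ∑ ε j c j` has second
moment `x² + A` and fourth moment at most `x⁴ + 6 x² A + 3 A²`, where `A = ∑ (c j)²`; the induction
on `n` picks the better value of the last sign. -/
theorem exists_signs {ι : Type*} (s : Finset ι) (α β : ι → ℝ) (hβ : ∀ g, 0 ≤ β g) (n : ℕ) :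
    ∀ (c : ℕ → ι → ℝ) (x : ι → ℝ), ∃ ε : ℕ → ℝ, (∀ j, |ε j| = 1) ∧
    ∑ g ∈ s, (α g * (x g ^ 2 + ∑ j ∈ range n, c j g ^ 2) - β g * (x g ^ 4 +
      6 * x g ^ 2 * ∑ j ∈ range n, c j g ^ 2 + 3 * (∑ j ∈ range n, c j g ^ 2) ^ 2)) ≤
    ∑ g ∈ s, (α g * (x g + ∑ j ∈ range n, ε j * c j g) ^ 2 -
      β g * (x g + ∑ j ∈ range n, ε j * c j g) ^ 4) := by
  induction n with
  | zero => intro c x; exact ⟨fun _ => 1, by simp, by simp⟩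
  | succ n ih =>
    intro c x
    obtain ⟨ε, hε, h1⟩ := ih c (fun g => x g + c n g)
    obtain ⟨δ, hδ, h2⟩ := ih c (fun g => x g - c n g)
    simp only [sum_range_succ]
    have h3 := add_le_add h1 h2
    set A := fun g => ∑ j ∈ range n, c j g ^ 2
    have h4 : 2 * ∑ g ∈ s, (α g * (x g ^ 2 + (A g + c n g ^ 2)) - β g * (x g ^ 4 +
        6 * x g ^ 2 * (A g + c n g ^ 2) + 3 * (A g + c n g ^ 2) ^ 2)) ≤
        ∑ g ∈ s, (α g * ((x g + c n g) ^ 2 + A g) - β g * ((x g + c n g) ^ 4 +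
        6 * (x g + c n g) ^ 2 * A g + 3 * A g ^ 2)) +
        ∑ g ∈ s, (α g * ((x g - c n g) ^ 2 + A g) - β g * ((x g - c n g) ^ 4 +
        6 * (x g - c n g) ^ 2 * A g + 3 * A g ^ 2)) := by
      rw [mul_sum, ← sum_add_distrib]
      refine sum_le_sum fun g _ => ?_
      nlinarith [mul_nonneg (hβ g) (sq_nonneg (c n g ^ 2))]
    have key : ∀ (ε : ℕ → ℝ) (t : ℝ) (g : ι),
        x g + (∑ j ∈ range n, Function.update ε n t j * c j g + Function.update ε n t n * c n g) =
        x g + t * c n g + ∑ j ∈ range n, ε j * c j g := by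
      intro ε t g
      rw [Function.update_self, sum_congr rfl fun j hj => by
        rw [Function.update_of_ne (mem_range.1 hj).ne]]
      ring
    have key2 : ∀ (ε : ℕ → ℝ) (t : ℝ), |t| = 1 → (∀ j, |ε j| = 1) →
        ∀ j, |Function.update ε n t j| = 1 := by
      intro ε t ht h j
      rcases eq_or_ne j n with rfl | hj
      · simpa using ht
      · rw [Function.update_of_ne hj]; exact h j
    rcases le_total (∑ g ∈ s, (α g * (x g + c n g + ∑ j ∈ range n, ε j * c j g) ^ 2 -
      β g * (x g + c n g + ∑ j ∈ range n, ε j * c j g) ^ 4))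
      (∑ g ∈ s, (α g * (x g - c n g + ∑ j ∈ range n, δ j * c j g) ^ 2 -
      β g * (x g - c n g + ∑ j ∈ range n, δ j * c j g) ^ 4)) with h | h
    · refine ⟨Function.update δ n (-1), key2 _ _ (by simp) hδ, ?_⟩
      simp only [key, neg_one_mul, ← sub_eq_add_neg]
      linarith
    · refine ⟨Function.update ε n 1, key2 _ _ (by simp) hε, ?_⟩
      simp only [key, one_mul]
      linarith

/-- Khintchine's inequality in `L¹`, summed over `s`, for one suitable choice of signs. It follows
from `exists_signs` and the elementary bound `|u| ≥ u² - u⁴ / 4`, applied to `u = (∑ ε j c j) / σ`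
with `σ = √(∑ (c j)²)`. -/
theorem exists_signs_abs {ι : Type*} (s : Finset ι) (n : ℕ) (c : ℕ → ι → ℝ) :
    ∃ ε : ℕ → ℝ, (∀ j, |ε j| = 1) ∧
    ∑ g ∈ s, √(∑ j ∈ range n, c j g ^ 2) ≤ 4 * ∑ g ∈ s, |∑ j ∈ range n, ε j * c j g| := by
  set σ : ι → ℝ := fun g => √(∑ j ∈ range n, c j g ^ 2) with hσ
  have hσ2 : ∀ g, ∑ j ∈ range n, c j g ^ 2 = σ g ^ 2 := fun g =>
    (Real.sq_sqrt (sum_nonneg fun _ _ => sq_nonneg _)).symm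
  have hσ0 : ∀ g, 0 ≤ σ g := fun g => Real.sqrt_nonneg _
  obtain ⟨ε, hε, h⟩ := exists_signs s (fun g => (σ g)⁻¹) (fun g => (σ g)⁻¹ ^ 3 / 4)
    (fun g => by have := hσ0 g; positivity) n c 0
  refine ⟨ε, hε, ?_⟩
  rw [mul_sum]
  have h1 : ∑ g ∈ s, σ g / 4 ≤ ∑ g ∈ s, |∑ j ∈ range n, ε j * c j g| := by
    calc _ = _ := sum_congr rfl fun g _ => ?_
      _ ≤ _ := h
      _ ≤ _ := sum_le_sum fun g _ => ?_
    · rw [hσ2]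
      rcases (hσ0 g).eq_or_lt with h0 | h0
      · simp [← h0]
      · simp; field_simp; norm_num
    · simp only [Pi.zero_apply, zero_add]
      rw [← sq_abs (∑ j ∈ range n, ε j * c j g),
        show (∑ j ∈ range n, ε j * c j g) ^ 4 = |∑ j ∈ range n, ε j * c j g| ^ 4 by
          rw [← abs_pow, abs_of_nonneg (by positivity)]]
      set t := |∑ j ∈ range n, ε j * c j g|
      have ht : 0 ≤ t := abs_nonneg _
      have hr : 0 ≤ (σ g)⁻¹ := inv_nonneg.2 (hσ0 g)
      set r := (σ g)⁻¹
      have hrt : 0 ≤ r * t := by positivity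
      have : r * t - (r * t) ^ 3 / 4 ≤ 1 := by
        nlinarith [mul_nonneg hrt (sq_nonneg (r * t - 1)), sq_nonneg (r * t - 1)]
      nlinarith [mul_le_mul_of_nonneg_left this ht]
  rw [← mul_sum]
  rw [← sum_div] at h1
  linarith

/-! ### Bounded operators from `ℓ^{3/2}` to `Y` -/

/-- Vectors with ranges `[0, N)` and `[k, N')`, where `N ≤ k`, add up to a single `vec b N'` whose
head of length `k` is the first summand. -/
theorem exists_glue (a a' : ℕ → ℝ) {N k N' : ℕ} (hN : N ≤ k) (hk : k ≤ N') :
    ∃ b, vec b k = vec a N ∧ vec b N' = vec a N + (vec a' N' - vec a' k) := by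
  set b : ℕ → ℝ := fun l => if l < k then (if l < N then a l else 0) else a' l with hb
  have h1 : vec b k = vec a N := by
    simp only [vec]
    symm
    rw [sum_congr rfl (g := fun l => b l • bd l)]
    · refine sum_subset (range_subset_range.2 hN) fun l hl hl' => ?_
      rw [hb]; simp [mem_range.1 hl, mem_range.not.1 hl']
    · intro l hl
      have := mem_range.1 hl
      simp [hb, this, this.trans_le hN]
  refine ⟨b, h1, ?_⟩
  rw [← h1]
  simp only [vec]
  rw [← sum_Ico_eq_sub _ hk, ← sum_range_add_sum_Ico _ hk]
  congr 1
  refine sum_congr rfl fun l hl => ?_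
  rw [hb]; simp [(mem_Ico.1 hl).1.not_gt]

theorem exists_pad (a : ℕ → ℝ) {N N' : ℕ} (h : N ≤ N') : ∃ b, vec b N' = vec a N := by
  obtain ⟨b, hb, -⟩ := exists_glue a a h le_rfl
  exact ⟨b, hb⟩

/-- The lower `ℓ¹` estimate: if a block `w = vec a' N' - vec a' k` comes after `u = vec a N` and
beyond the coordinate `γ`, then for every `η` some coordinate of `u + w` equals
`u γ + |w η| / 4`. It is the coordinate whose code is `(k, γ, η, s)` with a suitable sign. -/
theorem exists_coord_glue (a a' : ℕ → ℝ) {N k N' γ : ℕ} (hN : N ≤ k) (hγ : γ < k) (hk : k ≤ N')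
    (η : ℕ) : ∃ b γ', vec b N' = vec a N + (vec a' N' - vec a' k) ∧
      coord γ' (vec b N') = coord γ (vec a N) + |coord η (vec a' N' - vec a' k)| / 4 := by
  obtain ⟨b, hb1, hb2⟩ := exists_glue a a' hN hk
  have hs : ∃ s : ℕ, (-1 : ℝ) ^ s * coord η (vec a' N' - vec a' k) =
      |coord η (vec a' N' - vec a' k)| := by
    rcases abs_choice (coord η (vec a' N' - vec a' k)) with h | h
    · exact ⟨0, by rw [h]; simp⟩
    · exact ⟨1, by rw [h]; simp⟩
  obtain ⟨s, hs⟩ := hs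
  obtain ⟨γ', hγ', hc⟩ := exists_code (k, γ, η, s) (N' + η + 1)
  refine ⟨b, γ', hb2, ?_⟩
  rw [coord_vec, val_gt b (by omega), hc]
  dsimp only
  rw [if_pos ⟨hγ, by omega⟩, if_pos (by omega), min_eq_right hk, ← coord_vec, ← coord_vec,
    ← coord_vec, hb1, ← hs, hb2, map_add]
  ring

/-- An operator that is not compact stays at a fixed distance, along arbitrarily late indices, from
any sequence of compact operators. -/
theorem exists_far {E F : Type*} [NormedAddCommGroup E] [NormedSpace ℝ E]
    [NormedAddCommGroup F] [NormedSpace ℝ F] [CompleteSpace F] {S : E →L[ℝ] F}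
    (hS : ¬ IsCompactOperator S) (A : ℕ → E →L[ℝ] F) (hA : ∀ m, IsCompactOperator (A m)) :
    ∃ δ > 0, ∀ M, ∃ m ≥ M, δ < ‖S - A m‖ := by
  by_contra! h
  refine hS (isCompactOperator_of_tendsto (F := A) (l := atTop)
    (tendsto_iff_norm_sub_tendsto_zero.2 (Metric.tendsto_atTop.2 fun δ hδ => ?_))
    (Eventually.of_forall hA))
  obtain ⟨M, hM⟩ := h (δ / 2) (by positivity)
  refine ⟨M, fun m hm => ?_⟩
  rw [dist_zero_right, norm_norm, norm_sub_rev]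
  linarith [hM m hm]

/-- The blocks supplied by a non-compact `S`: finitely supported `v` in the unit ball, starting
arbitrarily late, with `‖S v‖ > δ` and with the first `k` coordinates of `S v` negligible. -/
theorem exists_block_of_far {S : L →L[ℝ] Y} {δ : ℝ} (hδ : 0 < δ)
    (h1 : ∀ M, ∃ m ≥ M, δ < ‖S - S.comp (trunc m)‖) (M k : ℕ) :
    ∃ v : L, (∀ i < M, v i = 0) ∧ (∃ M', ∀ i, M' ≤ i → v i = 0) ∧
      ‖v‖ ≤ 1 ∧ δ < ‖S v‖ ∧ ∀ i < k, |coord i (S v)| ≤ δ / 100 := by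
  have h2 : ∀ M, ∃ v : L, (∀ i < M, v i = 0) ∧ (∃ M', ∀ i, M' ≤ i → v i = 0) ∧
      ‖v‖ ≤ 1 ∧ δ < ‖S v‖ := by
    intro M
    obtain ⟨m, hm, hmδ⟩ := h1 M
    obtain ⟨x, hx, hxδ⟩ :=
      ContinuousLinearMap.exists_lt_apply_of_lt_opNorm _ hmδ
    have hxδ' : δ < ‖S (x - trunc m x)‖ := by simpa using hxδ
    obtain ⟨e, he⟩ := (((S.continuous.tendsto _).comp
      (tendsto_trunc (x - trunc m x))).norm.eventually_const_lt hxδ').exists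
    have hval : ∀ i, trunc e (x - trunc m x) i =
        if i < e then (if i < m then 0 else x i) else 0 := by
      intro i
      rw [trunc_apply, lp.coeFn_sub, Pi.sub_apply, trunc_apply]
      split_ifs <;> simp
    refine ⟨trunc e (x - trunc m x), fun i hi => ?_, ⟨e, fun i hi => ?_⟩, ?_, he⟩
    · rw [hval, if_pos (hi.trans_le hm), ite_self]
    · rw [hval, if_neg hi.not_gt]
    · refine (norm_mono fun i => ?_).trans hx.le
      rw [hval]; split_ifs <;> simp
  choose R hR using fun i => exists_tail_small ((coord i).comp S) (ε := δ / 100) (by positivity)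
  obtain ⟨v, hv, hv', hv1, hvδ⟩ := h2 (max M ((range k).sup R))
  refine ⟨v, fun i hi => hv i (lt_max_of_lt_left hi), hv', hv1, hvδ, fun i hi => ?_⟩
  exact hR i v (fun l hl => hv l (lt_max_of_lt_right
    (hl.trans_le (le_sup (f := R) (mem_range.2 hi))))) hv1

/-- `S u` is within `nδ/20` of a finite vector having a coordinate of size at least `nδ/8`. -/
def Grows (S : L →L[ℝ] Y) (δ : ℝ) (n : ℕ) (u : L) : Prop :=
  ∃ a N γ, ‖S u - vec a N‖ ≤ n * (δ / 20) ∧ n * (δ / 8) ≤ coord γ (vec a N)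

/-- The inductive step of the gliding hump. -/
theorem exists_grows_succ {S : L →L[ℝ] Y} {δ : ℝ} (hδ : 0 < δ)
    (h1 : ∀ M, ∃ m ≥ M, δ < ‖S - S.comp (trunc m)‖) (n : ℕ) (u : L) (M : ℕ)
    (hu : Grows S δ n u) :
    ∃ v : L, (∀ i < M, v i = 0) ∧ (∃ M', ∀ i, M' ≤ i → v i = 0) ∧ ‖v‖ ≤ 1 ∧
      Grows S δ (n + 1) (u + v) := by
  obtain ⟨a, N, γ, hu1, hu2⟩ := hu
  obtain ⟨v, hv, hv', hv1, hvδ, hvs⟩ := exists_block_of_far hδ h1 M (max N (γ + 1))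
  set k := max N (γ + 1) with hk
  obtain ⟨a', N', hN', hnear⟩ := exists_vec_near (S v) k (ε := δ / 100) (by positivity)
  -- The first `k` coordinates of `S v` are small, hence so is the head of the approximant.
  have hhead : ‖vec a' k‖ ≤ 2 * (δ / 50) := by
    refine norm_vec_le (by positivity) fun i hi => ?_
    rw [coord_vec, ← val_eq_of_le hi hN', ← coord_vec]
    have e1 := abs_coord_le i (S v - vec a' N')
    have e2 := hvs i hi
    rw [map_sub] at e1
    rw [abs_le] at e1 e2 ⊢
    constructor <;> linarith
  have hz : ‖S v - (vec a' N' - vec a' k)‖ ≤ δ / 20 := by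
    have : S v - (vec a' N' - vec a' k) = (S v - vec a' N') + vec a' k := by abel
    rw [this]
    linarith [norm_add_le (S v - vec a' N') (vec a' k)]
  have hz' : δ / 2 < ‖vec a' N' - vec a' k‖ := by
    have := norm_sub_norm_le (S v) (S v - (vec a' N' - vec a' k))
    rw [sub_sub_cancel] at this
    linarith
  obtain ⟨η, hη⟩ := exists_coord (by positivity) hz'
  obtain ⟨b, γ', hb, hb'⟩ := exists_coord_glue a a' (γ := γ) (le_max_left N (γ + 1))
    (by omega) hN' η
  refine ⟨v, hv, hv', hv1, b, N', γ', ?_, ?_⟩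
  · have : S (u + v) - vec b N' = (S u - vec a N) + (S v - (vec a' N' - vec a' k)) := by
      rw [hb, map_add]; abel
    rw [this]
    push_cast
    linarith [norm_add_le (S u - vec a N) (S v - (vec a' N' - vec a' k))]
  · rw [hb']
    push_cast
    linarith

/-- Otherwise a gliding hump would produce `n ^ 3` disjoint blocks of norm at most `1`, whose sum
has norm at most `n ^ 2` although its image has norm of order at least `n ^ 3`. -/
theorem isCompactOperator_of_dom (S : L →L[ℝ] Y) : IsCompactOperator S := by
  by_contra hS
  obtain ⟨δ, hδ, h1⟩ := exists_far hS (fun m => S.comp (trunc m))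
    fun m => (isCompactOperator_trunc m).clm_comp S
  refine false_of_growth (c := δ / 20) (K := ‖S‖) (by positivity) fun n => ?_
  obtain ⟨u, ⟨a, N, γ, hu1, hu2⟩, hun⟩ := exists_blocks
    (Grows S δ) ⟨0, 0, 0, by simp [vec], by simp [vec]⟩ (exists_grows_succ hδ h1) n
  have e1 := (le_abs_self _).trans (abs_coord_le γ (vec a N))
  have e2 := norm_sub_norm_le (vec a N) (S u)
  rw [norm_sub_rev] at e2
  have e3 := S.le_opNorm u
  have e4 := mul_le_mul_of_nonneg_left hun (norm_nonneg S)
  push_cast at hu1 hu2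
  have e5 : 0 ≤ (n : ℝ) ^ 3 * δ := by positivity
  linarith

/-! ### Bounded operators from `Y` to `ℓ^{3/2}` -/

theorem sum_smul_vec (A : ℕ → ℕ → ℝ) (c : ℕ → ℝ) (s : Finset ℕ) (N : ℕ) :
    ∑ γ ∈ s, c γ • vec (A γ) N = vec (fun l => ∑ γ ∈ s, c γ * A γ l) N := by
  simp only [vec, smul_sum, sum_smul, smul_smul]
  exact sum_comm

theorem vec_sub (a b : ℕ → ℝ) (N : ℕ) : vec a N - vec b N = vec (a - b) N := by
  simp [vec, sub_smul]

/-- The span of the first `N` basis vectors has a basis dual to its first `N` coordinates. -/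
theorem exists_dual_basis (N : ℕ) : ∃ e : ℕ → Y, ∀ a,
    vec a N = ∑ γ ∈ range N, coord γ (vec a N) • e γ := by
  choose A hA using fun γ => exists_vec_coord N (Pi.single γ 1)
  refine ⟨fun γ => vec (A γ) N, fun a => ?_⟩
  rw [← sub_eq_zero, ← norm_le_zero_iff]
  have hsum := sum_smul_vec A (fun γ => coord γ (vec a N)) (range N) N
  rw [hsum, vec_sub, ← mul_zero (2 : ℝ)]
  refine norm_vec_le le_rfl fun i hi => le_of_eq ?_
  rw [← vec_sub, ← hsum, map_sub, map_sum, abs_eq_zero]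
  simp only [map_smul, smul_eq_mul, hA _ i hi, Pi.single_apply, mul_ite, mul_one, mul_zero,
    sum_ite_eq, mem_range, if_pos hi, sub_self]

/-- The cotype 2 inequality for functionals on `Y`: if `g j (y j) ≥ δ` for unit-ball vectors `y j`,
then `∑ |g j x|` is at least of order `√G δ` for some bounded `x`. All `y j` live in a span of
`N` basis vectors, which is 2-isomorphic to `ℓ^∞_N`, so the `g j` may be regarded as elements of
`ℓ¹_N`; choose signs `ε j` by `exists_signs_abs` and let `x` norm `∑ ε j • g j`. -/
theorem cotype (G : ℕ) (g : ℕ → Y →L[ℝ] ℝ) (y : ℕ → Y) {δ : ℝ} (hy : ∀ j, ‖y j‖ ≤ 1)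
    (hfin : ∀ j, ∃ a N, y j = vec a N) (hg : ∀ j, δ ≤ g j (y j)) :
    ∃ x, ‖x‖ ≤ 2 ∧ G * δ ≤ √G * (4 * ∑ j ∈ range G, |g j x|) := by
  choose a₀ N₀ h₀ using hfin
  set N := (range G).sup N₀
  have hN : ∀ j ∈ range G, ∃ a, y j = vec a N := fun j hj => by
    obtain ⟨b, hb⟩ := exists_pad (a₀ j) (le_sup (f := N₀) hj)
    exact ⟨b, by rw [h₀ j, hb]⟩
  obtain ⟨e, he⟩ := exists_dual_basis N
  obtain ⟨ε, hε, hεs⟩ := exists_signs_abs (range N) G (fun j γ => g j (e γ))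
  set t : ℕ → ℝ := fun γ => ∑ j ∈ range G, ε j * g j (e γ) with ht
  obtain ⟨b, hb⟩ := exists_vec_coord N (fun γ => SignType.sign (t γ))
  have hx2 : ‖vec b N‖ ≤ 2 * 1 := norm_vec_le zero_le_one fun i hi => by
    rw [hb i hi]
    rcases SignType.sign (t i) <;> simp
  refine ⟨vec b N, by linarith, ?_⟩
  have h1 : G * δ ≤ ∑ j ∈ range G, ∑ γ ∈ range N, |g j (e γ)| := by
    have hc : (G : ℝ) * δ = #(range G) • δ := by rw [card_range, nsmul_eq_mul]
    rw [hc]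
    refine card_nsmul_le_sum _ _ _ fun j hj => (hg j).trans ?_
    obtain ⟨a, ha⟩ := hN j hj
    have hyj := hy j
    rw [ha] at hyj ⊢
    rw [he a, map_sum]
    refine sum_le_sum fun γ _ => ?_
    rw [map_smul, smul_eq_mul]
    refine (le_abs_self _).trans ?_
    rw [abs_mul]
    exact mul_le_of_le_one_left (abs_nonneg _) ((abs_coord_le γ _).trans hyj)
  have h2 : ∀ γ, ∑ j ∈ range G, |g j (e γ)| ≤ √G * √(∑ j ∈ range G, g j (e γ) ^ 2) := by
    intro γ
    rw [← Real.sqrt_mul (by positivity)]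
    refine Real.le_sqrt_of_sq_le ?_
    simpa using sq_sum_le_card_mul_sum_sq (s := range G) (f := fun j => |g j (e γ)|)
  have h3 : ∑ γ ∈ range N, |t γ| ≤ ∑ j ∈ range G, |g j (vec b N)| := by
    have : ∑ γ ∈ range N, |t γ| = ∑ j ∈ range G, ε j * g j (vec b N) := by
      conv_rhs => rw [he b]
      simp only [map_sum, map_smul, smul_eq_mul, mul_sum]
      rw [sum_comm]
      refine sum_congr rfl fun γ hγ => ?_
      rw [hb γ (mem_range.1 hγ), ← sign_mul_self, ht, mul_sum]
      refine sum_congr rfl fun j _ => ?_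
      ring
    rw [this]
    refine sum_le_sum fun j _ => (le_abs_self _).trans ?_
    rw [abs_mul, hε j, one_mul]
  calc G * δ ≤ ∑ γ ∈ range N, ∑ j ∈ range G, |g j (e γ)| := h1.trans_eq sum_comm
    _ ≤ ∑ γ ∈ range N, √G * √(∑ j ∈ range G, g j (e γ) ^ 2) := sum_le_sum fun γ _ => h2 γ
    _ = √G * ∑ γ ∈ range N, √(∑ j ∈ range G, g j (e γ) ^ 2) := (mul_sum _ _ _).symm
    _ ≤ √G * (4 * ∑ j ∈ range G, |g j (vec b N)|) := by
      gcongr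
      linarith

/-- Otherwise there are successive intervals on which `T` sends unit vectors to blocks of norm at
least `δ`. Norming these blocks by functionals, `cotype` yields a bounded `x` for which the first
`n ^ 6` blocks of `T x` have norms summing to at least a multiple of `n ^ 3`, whereas Hölder's
inequality bounds that sum by a multiple of `n ^ 2`. -/
theorem isCompactOperator_of_codom (T : Y →L[ℝ] L) : IsCompactOperator T := by
  by_contra hT
  obtain ⟨δ, hδ, h1⟩ := exists_far hT (fun m => (trunc m).comp T)
    fun m => (isCompactOperator_trunc m).comp_clm T
  have h2 : ∀ M, ∃ (y : Y) (e : ℕ) (φ : L →L[ℝ] ℝ), ‖y‖ ≤ 1 ∧ (∃ a N, y = vec a N) ∧ M ≤ e ∧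
      ‖φ‖ ≤ 1 ∧ δ ≤ φ (trunc e (T y) - trunc M (T y)) := by
    intro M
    obtain ⟨m, hm, hmδ⟩ := h1 M
    obtain ⟨x, hx, hxδ⟩ :=
      ContinuousLinearMap.exists_lt_apply_of_lt_opNorm _ hmδ
    have hxM : δ < ‖T x - trunc M (T x)‖ := by
      refine lt_of_lt_of_le hxδ (norm_mono fun i => ?_)
      simp only [FunLike.coe_sub, Pi.sub_apply, ContinuousLinearMap.comp_apply, lp.coeFn_sub,
        trunc_apply]
      split_ifs <;> first | omega | simp
    -- The conditions on `x` are open, so `x` may be replaced by a finite vector.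
    have ho : IsOpen {y : Y | ‖y‖ < 1 ∧ δ < ‖T y - trunc M (T y)‖} :=
      (isOpen_lt continuous_norm continuous_const).inter (isOpen_lt continuous_const
        (T.continuous.sub ((trunc M).continuous.comp T.continuous)).norm)
    obtain ⟨ε, hε, hball⟩ := Metric.isOpen_iff.1 ho x ⟨hx, hxM⟩
    obtain ⟨a, N, -, haN⟩ := exists_vec_near x 0 hε
    obtain ⟨hy1, hyδ⟩ := hball (by
      rwa [Metric.mem_ball, dist_comm, dist_eq_norm] : vec a N ∈ Metric.ball x ε)
    obtain ⟨e, he, hMe⟩ := ((((tendsto_trunc (T (vec a N))).sub_const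
      (trunc M (T (vec a N)))).norm.eventually_const_lt hyδ).and (eventually_ge_atTop M)).exists
    obtain ⟨φ, hφ, hφe⟩ := exists_dual_vector'' ℝ
      (trunc e (T (vec a N)) - trunc M (T (vec a N)))
    exact ⟨vec a N, e, φ, hy1.le, ⟨a, N, rfl⟩, hMe, hφ, by rw [hφe]; exact he.le⟩
  choose y e φ hy hfin he hφ hφδ using h2
  -- The endpoints of successive intervals.
  set m : ℕ → ℕ := fun j => e^[j] 0 with hm
  have hms : ∀ j, m (j + 1) = e (m j) := fun j => Function.iterate_succ_apply' e j 0
  have hmono : Monotone m := monotone_nat_of_le_succ fun j => by rw [hms]; exact he _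
  refine false_of_growth (c := δ) (K := 8 * ‖T‖) hδ fun n => ?_
  obtain ⟨x, hx, hxn⟩ := cotype (n ^ 6)
    (fun j => (φ (m j)).comp ((trunc (m (j + 1)) - trunc (m j)).comp T)) (fun j => y (m j))
    (fun j => hy _) (fun j => hfin _) (fun j => by rw [hms]; exact hφδ (m j))
  have hsum : ∑ j ∈ range (n ^ 6),
      |(φ (m j)).comp ((trunc (m (j + 1)) - trunc (m j)).comp T) x| ≤ (n : ℝ) ^ 2 * ‖T x‖ := by
    refine le_trans (sum_le_sum fun j _ => ?_) (sum_norm_trunc_sub_le hmono n (T x))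
    exact (φ (m j)).le_of_opNorm_le_of_le (hφ _) le_rfl |>.trans_eq (one_mul _)
  have hsq : √((n ^ 6 : ℕ) : ℝ) = (n : ℝ) ^ 3 := by
    rw [Nat.cast_pow, show (n : ℝ) ^ 6 = ((n : ℝ) ^ 3) ^ 2 by ring]
    exact Real.sqrt_sq (by positivity)
  rw [hsq] at hxn
  rcases Nat.eq_zero_or_pos n with rfl | hn
  · simp
  have hn3 : (0 : ℝ) < (n : ℝ) ^ 3 := by positivity
  have hTx : ‖T x‖ ≤ ‖T‖ * 2 := T.le_opNorm_of_le hx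
  refine le_of_mul_le_mul_left ?_ hn3
  calc (n : ℝ) ^ 3 * (δ * (n : ℝ) ^ 3) = ((n ^ 6 : ℕ) : ℝ) * δ := by push_cast; ring
    _ ≤ _ := hxn
    _ ≤ (n : ℝ) ^ 3 * (4 * ((n : ℝ) ^ 2 * (‖T‖ * 2))) := by
      gcongr
      exact hsum.trans (by gcongr)
    _ = _ := by ring

/-! ### The identity of `ℓ^{3/2}` -/

theorem not_isCompactOperator_id : ¬ IsCompactOperator (ContinuousLinearMap.id ℝ L) := by
  intro h
  have : LocallyCompactSpace L := isCompactOperator_id_iff_locallyCompactSpace.1 h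
  have : FiniteDimensional ℝ L := FiniteDimensional.of_locallyCompactSpace ℝ
  have hli : LinearIndependent ℝ (fun i : ℕ => (lp.single (3 / 2) i (1 : ℝ) : L)) := by
    rw [linearIndependent_iff']
    intro s c hc i hi
    have := congrArg (fun z : L => z i) hc
    simp only [lp.coeFn_sum, Finset.sum_apply, lp.coeFn_smul, Pi.smul_apply, lp.single_apply,
      Pi.single_apply, lp.coeFn_zero, Pi.zero_apply] at this
    simpa [hi] using this
  exact not_finite_iff_infinite.2 inferInstance hli.finite

end BD

end

/-- The compact operators transitivity property fails in general: there
exist real Banach spaces `X`, `Y`, `Z` such that every bounded linear operator from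
`X` to `Y` is compact and every bounded linear operator from `Y` to `Z` is compact,
yet there is a bounded linear operator from `X` to `Z` which is not compact. -/
theorem statement5 :
    ∃ (X Y Z : Type)
      (nX : NormedAddCommGroup X) (sX : @NormedSpace ℝ X _ nX.toSeminormedAddCommGroup)
      (nY : NormedAddCommGroup Y) (sY : @NormedSpace ℝ Y _ nY.toSeminormedAddCommGroup)
      (nZ : NormedAddCommGroup Z) (sZ : @NormedSpace ℝ Z _ nZ.toSeminormedAddCommGroup),
      @FailsCompactTransitivity X Y Z nX sX nY sY nZ sZ := by
  exact ⟨BD.L, BD.Y, BD.L, inferInstance, inferInstance, inferInstance, inferInstance,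
    inferInstance, inferInstance, inferInstance,
    (Submodule.isClosed_topologicalClosure _).completeSpace_coe, inferInstance,
    BD.isCompactOperator_of_dom, BD.isCompactOperator_of_codom, _, BD.not_isCompactOperator_id⟩
end
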